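/- Let p₀,p₁,p₂,p₃ ∈ ℝ³ span a small simplex S that contains its own circumcenter, with edge lengths y₁ = |p₀−p₁|, y₂ = |p₀−p₂|, y₃ = |p₀−p₃|, y₄ = |p₂−p₃|, y₅ = |p₁−p₃|, y₆ = |p₁−p₂|. Suppose y₁ ∈ [2.51, 2√2] and one of the following holds: (1) y₂ ∈ [2.06, 2.51] and y₃,y₄,y₅,y₆ ∈ [2, 2.51]; (2) y₄ ∈ [2.06, 2.51] and y₂,y₃,y₅,y₆ ∈ [2, 2.51]; (3) y₅ ∈ [2.08, 2.51] and y₂,y₃,y₄,y₆ ∈ [2, 2.51]. Then vor(S) < 0. -/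

import Mathlib

open MeasureTheory Real

noncomputable section

abbrev E3 : Type := EuclideanSpace ℝ (Fin 3)

/-- The density of the regular octahedron. -/
def δoct : ℝ := (-3 * π + 12 * arccos (1 / Real.sqrt 3)) / Real.sqrt 8

/-- The circumradius `η(a,b,c)` of a triangle with side lengths `a`, `b`, `c`. -/
def eta (a b c : ℝ) : ℝ :=
  a * b * c / Real.sqrt ((a + b + c) * (b + c - a) * (a + c - b) * (a + b - c))

/-- A simplex is small if all six edge lengths are at least `2` and each of the
four triangular faces has circumradius at most `√2`. -/
def IsSmall (p₀ p₁ p₂ p₃ : E3) : Prop :=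
  (2 ≤ dist p₀ p₁ ∧ 2 ≤ dist p₀ p₂ ∧ 2 ≤ dist p₀ p₃ ∧
    2 ≤ dist p₁ p₂ ∧ 2 ≤ dist p₁ p₃ ∧ 2 ≤ dist p₂ p₃) ∧
  eta (dist p₀ p₁) (dist p₀ p₂) (dist p₁ p₂) ≤ Real.sqrt 2 ∧
  eta (dist p₀ p₁) (dist p₀ p₃) (dist p₁ p₃) ≤ Real.sqrt 2 ∧
  eta (dist p₀ p₂) (dist p₀ p₃) (dist p₂ p₃) ≤ Real.sqrt 2 ∧
  eta (dist p₁ p₂) (dist p₁ p₃) (dist p₂ p₃) ≤ Real.sqrt 2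

/-- `S = conv {p₀, p₁, p₂, p₃}` contains its own circumcenter. -/
def ContainsCircumcenter (p₀ p₁ p₂ p₃ : E3) : Prop :=
  ∃ c ∈ convexHull ℝ ({p₀, p₁, p₂, p₃} : Set E3),
    dist c p₀ = dist c p₁ ∧ dist c p₀ = dist c p₂ ∧ dist c p₀ = dist c p₃

/-- The Voronoi score of the simplex `S = conv {p₀, p₁, p₂, p₃}` at the vertex `p₀`:
`vor(S) = 4·(-δ_oct · vol {x ∈ S : |x-p₀| ≤ |x-pⱼ|, j = 1,2,3} + vol (B(p₀,1) ∩ C(S)))`,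
where `C(S)` is the cone over `S` with apex `p₀`. -/
def vor (p₀ p₁ p₂ p₃ : E3) : ℝ :=
  4 * (-δoct * (volume {x ∈ convexHull ℝ ({p₀, p₁, p₂, p₃} : Set E3) |
        dist x p₀ ≤ dist x p₁ ∧ dist x p₀ ≤ dist x p₂ ∧ dist x p₀ ≤ dist x p₃}).toReal +
      (volume (Metric.closedBall p₀ 1 ∩
        {y : E3 | ∃ x ∈ convexHull ℝ ({p₀, p₁, p₂, p₃} : Set E3), ∃ t : ℝ, 0 ≤ t ∧
          y = p₀ + t • (x - p₀)})).toReal)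


lemma arctan_tangent {t t0 : ℝ} (ht : 0 ≤ t) (ht0 : 0 < t0) :
    arctan t ≤ arctan t0 + (t - t0) / (1 + t0 ^ 2) := by
  set g : ℝ → ℝ := fun s => arctan s - s / (1 + t0 ^ 2) with hg
  have hpos : 0 < 1 + t0 ^ 2 := by positivity
  have hd : ∀ s, HasDerivAt g (1 / (1 + s ^ 2) - 1 / (1 + t0 ^ 2)) s := fun s =>
    (hasDerivAt_arctan s).sub ((hasDerivAt_id s).div_const _)
  have hc : Continuous g := by
    rw [continuous_iff_continuousAt]; exact fun s => (hd s).continuousAt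
  have key : g t ≤ g t0 := by
    rcases le_total t t0 with h | h
    · have hm : MonotoneOn g (Set.Icc 0 t0) := by
        apply monotoneOn_of_deriv_nonneg (convex_Icc _ _) hc.continuousOn
        · exact fun s _ => (hd s).differentiableAt.differentiableWithinAt
        · intro s hs
          rw [interior_Icc] at hs
          rw [(hd s).deriv, sub_nonneg]
          apply one_div_le_one_div_of_le (by positivity)
          nlinarith [hs.1, hs.2]
      exact hm ⟨ht, h⟩ ⟨ht0.le, le_rfl⟩ h
    · have hm : AntitoneOn g (Set.Ici t0) := by
        apply antitoneOn_of_deriv_nonpos (convex_Ici _) hc.continuousOn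
        · exact fun s _ => (hd s).differentiableAt.differentiableWithinAt
        · intro s hs
          rw [interior_Ici] at hs
          have hs' : t0 < s := hs
          rw [(hd s).deriv, sub_nonpos]
          apply one_div_le_one_div_of_le (by positivity)
          nlinarith
      exact hm (Set.mem_Ici.2 le_rfl) (Set.mem_Ici.2 h) h
  simp only [hg] at key
  rw [sub_div]; linarith

lemma arctan_upper {t : ℝ} (ht : 0 ≤ t) : arctan t ≤ t - t ^ 3 / 3 + t ^ 5 / 5 := by
  set g : ℝ → ℝ := fun s => s - s ^ 3 / 3 + s ^ 5 / 5 - arctan s with hg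
  have hd : ∀ s, HasDerivAt g (1 - (3:ℕ) * s ^ 2 * 1 / 3 + (5:ℕ) * s ^ 4 * 1 / 5 -
      1 / (1 + s ^ 2)) s := fun s =>
    ((((hasDerivAt_id s).sub (((hasDerivAt_id s).pow 3).div_const 3)).add
      (((hasDerivAt_id s).pow 5).div_const 5))).sub (hasDerivAt_arctan s)
  have hm : Monotone g := by
    apply monotone_of_deriv_nonneg (fun s => (hd s).differentiableAt)
    intro s
    rw [(hd s).deriv]
    have hp : 0 < 1 + s ^ 2 := by positivity
    have : 1 - ((3:ℕ):ℝ) * s ^ 2 * 1 / 3 + ((5:ℕ):ℝ) * s ^ 4 * 1 / 5 - 1 / (1 + s ^ 2) =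
        s ^ 6 / (1 + s ^ 2) := by
      field_simp; push_cast; ring
    rw [this]; positivity
  have := hm ht
  simp only [hg, arctan_zero] at this
  linarith

lemma arctan_lower {t : ℝ} (ht : 0 ≤ t) :
    t - t ^ 3 / 3 + t ^ 5 / 5 - t ^ 7 / 7 ≤ arctan t := by
  set g : ℝ → ℝ := fun s => arctan s - (s - s ^ 3 / 3 + s ^ 5 / 5 - s ^ 7 / 7) with hg
  have hd : ∀ s, HasDerivAt g (1 / (1 + s ^ 2) - (1 - (3:ℕ) * s ^ 2 * 1 / 3 +
      (5:ℕ) * s ^ 4 * 1 / 5 - (7:ℕ) * s ^ 6 * 1 / 7)) s := fun s =>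
    (hasDerivAt_arctan s).sub ((((hasDerivAt_id s).sub (((hasDerivAt_id s).pow 3).div_const 3)).add
      (((hasDerivAt_id s).pow 5).div_const 5)).sub (((hasDerivAt_id s).pow 7).div_const 7))
  have hm : Monotone g := by
    apply monotone_of_deriv_nonneg (fun s => (hd s).differentiableAt)
    intro s
    rw [(hd s).deriv]
    have hp : 0 < 1 + s ^ 2 := by positivity
    have : 1 / (1 + s ^ 2) - (1 - ((3:ℕ):ℝ) * s ^ 2 * 1 / 3 +
      ((5:ℕ):ℝ) * s ^ 4 * 1 / 5 - ((7:ℕ):ℝ) * s ^ 6 * 1 / 7) =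
        s ^ 8 / (1 + s ^ 2) := by
      field_simp; push_cast; ring
    rw [this]; positivity
  have := hm ht
  simp only [hg, arctan_zero] at this
  linarith

lemma arccos_inv_sqrt_three : arccos (1 / √3) = π / 4 + arctan (3 - 2 * √2) := by
  have h2 : √2 ^ 2 = 2 := Real.sq_sqrt (by norm_num)
  have h2p : 0 < √2 := by positivity
  have h3 : arctan 1 + arctan (3 - 2 * √2) = arctan √2 := by
    have hlt : 1 * (3 - 2 * √2) < 1 := by nlinarith
    rw [arctan_add hlt]
    congr 1
    have : 1 - 1 * (3 - 2 * √2) ≠ 0 := by linarith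
    rw [div_eq_iff this]; nlinarith
  rw [← arctan_one, h3, arccos_eq_arctan (by positivity)]
  congr 1
  have h3' : √3 ^ 2 = 3 := Real.sq_sqrt (by norm_num)
  have h3p : 0 < √3 := by positivity
  have : (1 - (1 / √3) ^ 2) = 2 / 3 := by
    rw [div_pow, h3']; norm_num
  rw [this, Real.sqrt_div (by norm_num)]
  field_simp

lemma delta_eq : δoct = 3 * √2 * arctan (3 - 2 * √2) := by
  unfold δoct
  rw [arccos_inv_sqrt_three]
  have h8 : √8 = 2 * √2 := by
    rw [show (8:ℝ) = 2 ^ 2 * 2 by norm_num, Real.sqrt_mul (by norm_num), Real.sqrt_sq (by norm_num)]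
  have h2 : √2 ^ 2 = 2 := Real.sq_sqrt (by norm_num)
  have h2p : 0 < √2 := by positivity
  rw [h8, div_eq_iff (by positivity)]
  linear_combination (-6 * arctan (3 - 2 * √2)) * h2

lemma sqrt_two_bounds : (1.41421356 : ℝ) < √2 ∧ √2 < 1.41421357 := by
  constructor
  · rw [Real.lt_sqrt (by norm_num)]; norm_num
  · rw [Real.sqrt_lt' (by norm_num)]; norm_num

lemma delta_bounds : (0.7209 : ℝ) < δoct ∧ δoct * √2 < 1.01952 := by
  obtain ⟨hl, hu⟩ := sqrt_two_bounds
  have h2 : √2 ^ 2 = 2 := Real.sq_sqrt (by norm_num)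
  obtain ⟨t, ht⟩ : ∃ t, t = 3 - 2 * √2 := ⟨_, rfl⟩
  have htl : 0.17157286 ≤ t := by rw [ht]; linarith
  have htu : t ≤ 0.17157288 := by rw [ht]; linarith
  have ht0 : 0 ≤ t := by linarith
  have hL := arctan_lower ht0
  have hU := arctan_upper ht0
  rw [delta_eq, ← ht]
  have hL' : 0.169918 ≤ arctan t := by
    have h3 : t ^ 3 ≤ 0.17157288 ^ 3 := pow_le_pow_left₀ ht0 htu 3
    have h5 : 0.17157286 ^ 5 ≤ t ^ 5 := pow_le_pow_left₀ (by norm_num) htl 5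
    have h7 : t ^ 7 ≤ 0.17157288 ^ 7 := pow_le_pow_left₀ ht0 htu 7
    norm_num at h3 h5 h7 ⊢
    linarith
  have hU' : arctan t ≤ 0.1699193 := by
    have h3 : 0.17157286 ^ 3 ≤ t ^ 3 := pow_le_pow_left₀ (by norm_num) htl 3
    have h5 : t ^ 5 ≤ 0.17157288 ^ 5 := pow_le_pow_left₀ ht0 htu 5
    norm_num at h3 h5 ⊢
    linarith
  constructor
  · nlinarith
  · have : 3 * √2 * arctan t * √2 = 6 * arctan t := by linear_combination 3 * arctan t * h2
    rw [this]; linarith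


/-- Gram determinant of three vectors in terms of the Gram entries. -/
def gramDet (x1 x2 x3 g12 g13 g23 : ℝ) : ℝ :=
  x1 * x2 * x3 + 2 * g12 * g13 * g23 - x1 * g23 ^ 2 - x2 * g13 ^ 2 - x3 * g12 ^ 2

/-- Cramer numerator of the `k`-th coordinate of the circumcenter. -/
def cramerNum (xk xi xj gki gkj gij : ℝ) : ℝ :=
  (xk * (xi * xj - gij ^ 2) - xi * (gki * xj - gij * gkj) - xj * (gkj * xi - gij * gki)) / 2

section Certificate
set_option linter.unusedVariables false
set_option maxHeartbeats 4000000

lemma cert_nonneg0 (a b c d e f ta tb tc td te tf : ℝ) (ha : 0 ≤ a) (hb : 0 ≤ b) (hc : 0 ≤ c)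
    (hd : 0 ≤ d) (he : 0 ≤ e) (hf : 0 ≤ f) (hta : 0 ≤ ta) (htb : 0 ≤ tb) (htc : 0 ≤ tc)
    (htd : 0 ≤ td) (hte : 0 ≤ te) (htf : 0 ≤ tf) :
    0 ≤ ta * (1.318 * f + 0.086 * f^2 + 0.601 * e + 1.383 * e*f + 0.335 * e^2 + 0.333 * d +
      1.106 * d*f + 0.075 * d*f^2 + 0.007 * d*f^3 + 1.106 * d*e + 0.045 * d*e^2 + 0.008 * d*e^3) ∧
    0 ≤ ta * (0.013 * d^3*e + 0.012 * d^4 + 3.834 * c*f + 0.018 * c*e^3 + 0.207 * c*d + 0.004 *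
      c*d*f^2 + 0.175 * c*d*e + 0.027 * c*d*e^2 + 0.053 * c*d^2 + 0.023 * c*d^2*f + 0.01 *
      c*d^2*e + 0.004 * c^2*e*f) ∧
    0 ≤ ta * (0.003 * c^2*e^2 + 0.186 * c^2*d + 0.029 * c^2*d*e + 0.044 * c^2*d^2 + 0.063 * c^3
      + 0.009 * c^3*d + 0.009 * b*f^3 + 2.171 * b*e + 0.158 * b*e*f + 0.007 * b*e^3 + 0.207 *
      b*d + 0.198 * b*d*f) ∧
    0 ≤ ta * (0.027 * b*d*f^2 + 0.018 * b*d*e*f + 0.053 * b*d^2 + 0.023 * b*d^2*e + 1.027 * b*c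
      + 0.225 * b*c*e + 0.033 * b*c*e^2 + 0.184 * b*c*d + 0.039 * b*c*d*e + 0.003 * b^2*f^2 +
      0.004 * b^2*e*f + 0.374 * b^2*d) ∧
    0 ≤ ta * (0.153 * b^3 + 2.6 * a + 0.824 * a*f + 0.402 * a*e + 0.704 * a*d + 0.184 * a*d*f +
      0.184 * a*d*e + 0.008 * a*d*e*f + 0.234 * a*d^2 + 0.017 * a*d^3 + 0.308 * a*c + 0.415 *
      a*c*f) ∧
    0 ≤ ta * (0.038 * a*c*e^2 + 0.039 * a*c*d*e + 0.058 * a*c^2 + 0.039 * a*c^2*d + 0.308 * a*b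
      + 0.025 * a*b*f^2 + 0.415 * a*b*e + 0.039 * a*b*d*f + 0.403 * a*b*c + 0.058 * a*b^2 +
      0.039 * a*b^2*d + 0.748 * a^2) ∧
    0 ≤ ta * (0.161 * a^2*d + 0.009 * a^2*d^2 + 0.099 * a^2*c + 0.006 * a^2*c*e + 0.025 *
      a^2*c*d + 0.099 * a^2*b + 0.006 * a^2*b*f + 0.025 * a^2*b*d) ∧
    0 ≤ tb * (0.034 * c^2*f + 0.024 * c^2*e*f + 0.425 * c^2*d + 0.016 * c^2*d*e + 0.028 *
      c^2*d^2 + 0.009 * c^3*f + 0.028 * c^3*e + 7.996 * b + 0.013 * b*e^3 + 0.01 * b*d*e*f +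
      0.006 * b*d*e^2 + 0.309 * b*c) ∧
    0 ≤ tb * (0.008 * b*c*f^2 + 0.056 * b*c*e + 0.024 * b*c*e*f + 0.373 * b*c*d + 0.016 *
      b*c*d*f + 0.042 * b*c*d*e + 0.051 * b*c*d^2 + 0.028 * b*c^2*e + 1.96 * b^2 + 0.225 * b^2*f
      + 0.021 * b^2*e^2 + 0.137 * b^2*d) ∧
    0 ≤ tb * (0.018 * b^2*d*e + 0.009 * b^2*c*e + 0.001 * b^3*e + 0.391 * a*c*f + 0.015 *
      a*c*e*f + 0.006 * a*c^2*d + 0.145 * a*b*e + 0.009 * a*b^2*d + 0.013 * a^2*f^2 + 0.029 *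
      a^2*c*f + 0.034 * a^2*b*e + 0.033 * a^3*f) := by
  refine ⟨?_, ?_, ?_, ?_, ?_, ?_, ?_, ?_, ?_, ?_⟩ <;> positivity

lemma cert_nonneg1 (a b c d e f ta tb tc td te tf : ℝ) (ha : 0 ≤ a) (hb : 0 ≤ b) (hc : 0 ≤ c)
    (hd : 0 ≤ d) (he : 0 ≤ e) (hf : 0 ≤ f) (hta : 0 ≤ ta) (htb : 0 ≤ tb) (htc : 0 ≤ tc)
    (htd : 0 ≤ td) (hte : 0 ≤ te) (htf : 0 ≤ tf) :
    0 ≤ tc * (7.516 * c + 0.026 * c*f^3 + 0.008 * c*e*f^2 + 0.004 * c*d*f^2 + 0.01 * c*d*e*f +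
      2.271 * c^2 + 0.021 * c^2*f^2 + 0.029 * c^2*e*f + 0.136 * c^2*d + 0.024 * c^2*d*f + 0.009
      * c^3*f + 0.02 * b*d*e*f) ∧
    0 ≤ tc * (0.309 * b*c + 0.011 * b*c*f^2 + 0.042 * b*c*d*f + 0.011 * b^2*e^2 + 0.028 *
      b^2*c*f + 0.028 * b^3*f + 0.153 * a*c*f + 0.036 * a*c*f^2 + 0.039 * a*c^2*f + 0.006 *
      a*b^2*d + 0.034 * a^2*c*f + 0.029 * a^2*b*e) ∧
    0 ≤ tc * (0.033 * a^3*e) ∧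
    0 ≤ td * (0.035 * f^3 + 0.434 * e*f + 0.036 * e^3 + 1.668 * d + 0.033 * d*f^2 + 0.046 *
      d*e*f + 0.055 * d*e^2 + 0.405 * d^2 + 0.011 * d^2*f + 0.033 * d^2*e + 0.016 * c*f^3 +
      0.202 * c*e*f) ∧
    0 ≤ td * (1.588 * c*d + 0.013 * c*d*f^2 + 0.096 * c*d*e + 0.221 * c*d^2 + 0.009 * c^2*f^2 +
      0.02 * c^3*f + 0.331 * b*e*f + 0.016 * b*e^3 + 1.588 * b*d + 0.029 * b*d*f + 0.022 *
      b*d*e*f + 0.013 * b*d*e^2) ∧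
    0 ≤ td * (0.221 * b*d^2 + 0.022 * b*c*f^2 + 0.009 * b*c*d^2 + 0.023 * b*c^2*d + 0.019 *
      b^3*e + 0.009 * a*f^3 + 0.106 * a*e*f + 0.053 * a*e^2 + 0.017 * a*e^2*f + 0.009 * a*e^3 +
      0.142 * a*d*f + 0.167 * a*d*e) ∧
    0 ≤ td * (0.005 * a*d^2*e + 0.012 * a*d^3 + 0.015 * a*c*f^2 + 0.018 * a*c*e*f + 0.019 *
      a*b*e^2 + 0.01 * a*b*d*f + 0.039 * a*b*c*f + 0.048 * a*b*c*d + 0.044 * a*b^2*d + 0.007 *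
      a^2*f^2 + 0.007 * a^2*e^2 + 0.012 * a^2*d^2) ∧
    0 ≤ td * (0.026 * a^2*c*f + 0.026 * a^2*b*e + 0.059 * a^2*b*c + 0.001 * a^3 + 0.008 * a^3*c
      + 0.008 * a^3*b) ∧
    0 ≤ te * (1.642 * e + 0.096 * e*f + 0.303 * e^2 + 0.01 * e^3 + 0.047 * d*e*f + 1.681 * c +
      0.022 * c*f^2 + 0.017 * c*f^3 + 1.17 * c*e + 0.105 * c*e^2 + 0.003 * c*e^2*f + 0.021 *
      c*d*e*f) ∧
    0 ≤ te * (0.897 * c^2 + 0.067 * c^2*e + 0.009 * c^2*e*f + 0.16 * c^3 + 0.858 * b*e + 0.003 *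
      b*e*f^2 + 0.244 * b*e^2 + 0.017 * b*e^3 + 0.009 * b*d^2*e + 0.023 * b*d^3 + 0.013 *
      b*c*f^2 + 0.307 * b*c*e) := by
  refine ⟨?_, ?_, ?_, ?_, ?_, ?_, ?_, ?_, ?_, ?_⟩ <;> positivity

lemma cert_nonneg2 (a b c d e f ta tb tc td te tf : ℝ) (ha : 0 ≤ a) (hb : 0 ≤ b) (hc : 0 ≤ c)
    (hd : 0 ≤ d) (he : 0 ≤ e) (hf : 0 ≤ f) (hta : 0 ≤ ta) (htb : 0 ≤ tb) (htc : 0 ≤ tc)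
    (htd : 0 ≤ td) (hte : 0 ≤ te) (htf : 0 ≤ tf) :
    0 ≤ te * (0.013 * b*c*e*f + 0.028 * b*c*e^2 + 0.022 * b*c*d*e + 0.008 * b*c^2*e + 0.139 *
      b^2*e + 0.017 * b^2*e*f + 0.013 * b^2*e^2 + 0.006 * b^2*d*e + 0.291 * b^3 + 0.029 * b^3*f
      + 0.007 * b^3*d + 0.008 * b^4) ∧
    0 ≤ te * (0.024 * a*e*f + 0.028 * a*d*e + 0.016 * a*d^2*e + 0.004 * a*d^3 + 0.235 * a*c*f +
      0.03 * a*c*e*f + 0.004 * a*c*e^2 + 0.003 * a*c*d*e + 0.163 * a*b*e + 0.014 * a*b*e*f +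
      0.036 * a*b^2*e + 0.039 * a*b^3) ∧
    0 ≤ te * (0.401 * a^2 + 0.009 * a^2*f + 0.011 * a^2*d^2 + 0.023 * a^2*c*f) ∧
    0 ≤ tf * (1.112 * f + 0.256 * f^2 + 0.01 * f^3 + 0.059 * e*f + 0.019 * e*f^2 + 0.035 * e^2*f
      + 0.019 * e^3 + 0.047 * d*e*f + 0.022 * d^2*f + 0.848 * c*f + 0.263 * c*f^2 + 0.017 *
      c*f^3) ∧
    0 ≤ tf * (0.021 * c*e^2*f + 0.018 * c*e^3 + 0.009 * c*d^2*f + 0.022 * c*d^2*e + 0.023 *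
      c*d^3 + 0.105 * c^2*f + 0.009 * c^2*e*f + 0.333 * c^3 + 1.378 * b + 1.038 * b*f + 0.048 *
      b*f^2 + 0.021 * b*e*f^2) ∧
    0 ≤ tf * (0.045 * b*e^2 + 0.018 * b*e^2*f + 0.017 * b*e^3 + 0.021 * b*d*e*f + 0.376 * b*c*f
      + 0.028 * b*c*f^2 + 1.416 * b^2 + 0.067 * b^2*f + 0.009 * b^2*e*f + 0.041 * a*e*f + 0.055
      * a*e^2 + 0.054 * a*d*f) ∧
    0 ≤ tf * (0.001 * a*d*f^2 + 0.017 * a*d*e*f + 0.014 * a*d^2 + 0.016 * a*d^2*f + 0.022 *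
      a*d^3 + 0.253 * a*c*f + 0.007 * a*c*f^2 + 0.014 * a*c*e*f + 0.014 * a*b*f^2 + 0.03 *
      a*b*e*f + 0.003 * a*b*d*f + 0.033 * a*b*c*f) ∧
    0 ≤ tf * (0.029 * a*b^2*d + 0.011 * a^2*d^2 + 0.023 * a^2*b*e) ∧
    0 ≤ 0.8537492032 * f + 0.8531192032 * e + 0.85367769696 * d + 1.260169928 * c + 0.852892928
      * b + 0.85464356 * a + 0.01946904 * f^2 + 0.01743244 * e*f + 0.01802204 * e^2 +
      0.01784417392 * d*f + 0.01784417392 * d*e + 0.0177500784 * d^2 ∧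
    0 ≤ 0.6922824656 * c*f + 0.0179903664 * c*e + 0.39970981232 * c*d + 0.0176259568 * c^2 +
      0.0187223664 * b*f + 3.4963724656 * b*e + 0.39970981232 * b*d + 8.4540751552 * b*c +
      0.0190179568 * b^2 + 0.0182778504 * a*f + 0.0186778504 * a*e + 0.01935601488 * a*d := by
  refine ⟨?_, ?_, ?_, ?_, ?_, ?_, ?_, ?_, ?_, ?_⟩ <;> positivity

lemma cert_nonneg3 (a b c d e f ta tb tc td te tf : ℝ) (ha : 0 ≤ a) (hb : 0 ≤ b) (hc : 0 ≤ c)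
    (hd : 0 ≤ d) (he : 0 ≤ e) (hf : 0 ≤ f) (hta : 0 ≤ ta) (htb : 0 ≤ tb) (htc : 0 ≤ tc)
    (htd : 0 ≤ td) (hte : 0 ≤ te) (htf : 0 ≤ tf) :
    0 ≤ 0.616235692 * a*c + 0.616235692 * a*b + 0.0184462696 * a^2 + 0.01860636 * f^3 +
      0.01765964 * e*f^2 + 0.01784364 * e^2*f + 0.01958636 * e^3 + 0.018683836 * d*f^2 +
      0.017805628 * d*e*f + 0.019061836 * d*e^2 + 0.01789212828 * d^2*f + 0.01789212828 * d^2*e ∧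
    0 ≤ 0.01876471144 * d^3 + 0.01833336 * c*f^2 + 0.78491986 * c*e*f + 0.01854822 * c*e^2 +
      0.6692000124 * c*d*f + 1.71637094148 * c*d*e + 0.01861929548 * c*d^2 + 0.0189980888 *
      c^2*f + 0.0195865604 * c^2*e + 0.01935381692 * c^2*d + 0.0176738676 * c^3 + 0.01770522 *
      b*f^2 ∧
    0 ≤ 0.21949086 * b*e*f + 0.01912936 * b*e^2 + 1.83143794148 * b*d*f + 0.6692000124 * b*d*e +
      0.01861929548 * b*d^2 + 0.6431505196 * b*c*f + 0.2905635196 * b*c*e + 0.207972296 * b*c*d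
      + 0.0181171956 * b*c^2 + 0.0208615604 * b^2*f + 0.0189980888 * b^2*e + 0.67537781692 *
      b^2*d ∧
    0 ≤ 0.0181171956 * b^2*c + 0.0184758676 * b^3 + 0.01859472 * a*f^2 + 0.02002118 * a*e*f +
      0.01908672 * a*e^2 + 0.0179205306 * a*d*f + 0.0202215306 * a*d*e + 0.017386278 * a*d^2 +
      0.015852856 * a*c*f + 0.5850447986 * a*c*e + 0.01864689832 * a*c*d + 0.250481793 * a*c^2 ∧
    0 ≤ 0.5850447986 * a*b*f + 0.018776856 * a*b*e + 0.01864689832 * a*b*d + 0.0180711312 *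
      a*b*c + 0.250481793 * a*b^2 + 0.01905012 * a^2*f + 0.01875912 * a^2*e + 0.018127676 *
      a^2*d + 0.0177645814 * a^2*c + 0.0177645814 * a^2*b + 0.01859562 * a^3 + 0.018109 * f^4 ∧
    0 ≤ 0.019 * e*f^3 + 0.018782 * e^2*f^2 + 0.019 * e^3*f + 0.018109 * e^4 + 0.018348126 *
      d*f^3 + 0.018884374 * d*e*f^2 + 0.018884374 * d*e^2*f + 0.017648126 * d*e^3 + 0.018552748
      * d^2*f^2 + 0.018359859 * d^2*e*f + 0.018552748 * d^2*e^2 + 0.01891979 * d^3*f ∧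
    0 ≤ 0.01881979 * d^3*e + 0.01782042 * d^4 + 0.01590082 * c*f^3 + 0.01802602 * c*e*f^2 +
      0.01699918 * c*e^2*f + 0.01854798 * c*e^3 + 0.016203103 * c*d*f^2 + 0.018783165 * c*d*e*f
      + 0.018334092 * c*d*e^2 + 0.02033986227 * c*d^2*f + 0.0182049892 * c*d^2*e + 0.0192746876
      * c*d^3 ∧
    0 ≤ 0.018937835 * c^2*f^2 + 0.015989835 * c^2*e*f + 0.01843576 * c^2*e^2 + 0.01919459903 *
      c^2*d*f + 0.0379635932 * c^2*d*e + 0.0182931092 * c^2*d^2 + 0.0196553409 * c^3*f +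
      0.018406756 * c^3*e + 0.0190715248 * c^3*d + 0.036782424 * c^4 + 0.01826598 * b*f^3 +
      0.01699918 * b*e*f^2 ∧
    0 ≤ 0.01801602 * b*e^2*f + 0.01491382 * b*e^3 + 0.018334092 * b*d*f^2 + 0.020541165 *
      b*d*e*f + 0.018401103 * b*d*e^2 + 0.0188269892 * b*d^2*f + 0.02033986227 * b*d^2*e +
      0.0192746876 * b*d^3 + 0.020618765 * b*c*f^2 + 0.07477901 * b*c*e*f + 0.019772765 *
      b*c*e^2 + 0.10574520237 * b*c*d*f ∧
    0 ≤ 0.02563920237 * b*c*d*e + 0.04281311726 * b*c*d^2 + 0.018138796 * b*c^2*f + 0.0500442111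
      * b*c^2*e + 0.0183343886 * b*c^2*d + 0.073564848 * b*c^3 + 0.01843576 * b^2*f^2 +
      0.119534835 * b^2*e*f + 0.018422835 * b^2*e^2 + 0.1240795932 * b^2*d*f + 0.01919459903 *
      b^2*d*e + 0.1575211092 * b^2*d^2 := by
  refine ⟨?_, ?_, ?_, ?_, ?_, ?_, ?_, ?_, ?_, ?_⟩ <;> positivity

lemma cert_nonneg4 (a b c d e f ta tb tc td te tf : ℝ) (ha : 0 ≤ a) (hb : 0 ≤ b) (hc : 0 ≤ c)
    (hd : 0 ≤ d) (he : 0 ≤ e) (hf : 0 ≤ f) (hta : 0 ≤ ta) (htb : 0 ≤ tb) (htc : 0 ≤ tc)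
    (htd : 0 ≤ td) (hte : 0 ≤ te) (htf : 0 ≤ tf) :
    0 ≤ 0.0684522111 * b^2*c*f + 0.019429796 * b^2*c*e + 0.0192573886 * b^2*c*d + 0.073564848 *
      b^2*c^2 + 0.016677756 * b^3*f + 0.0190733409 * b^3*e + 0.0192645248 * b^3*d + 0.073564848
      * b^3*c + 0.018374424 * b^4 + 0.01818717 * a*f^3 + 0.01832183 * a*e*f^2 + 0.01720483 *
      a*e^2*f ∧
    0 ≤ 0.01818717 * a*e^3 + 0.01833671 * a*d*f^2 + 0.016860237 * a*d*e*f + 0.01763771 * a*d*e^2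
      + 0.018280767 * a*d^2*f + 0.017775767 * a*d^2*e + 0.01654531107 * a*d^3 + 0.01751915 *
      a*c*f^2 + 0.02156135 * a*c*e*f + 0.01939446 * a*c*e^2 + 0.06128046965 * a*c*d*f +
      0.01792972 * a*c*d*e ∧
    0 ≤ 0.01862825503 * a*c*d^2 + 0.01879722935 * a*c^2*f + 0.211251804 * a*c^2*e + 0.0189150537
      * a*c^2*d + 0.01823832 * a*c^3 + 0.01848446 * a*b*f^2 + 0.02049435 * a*b*e*f + 0.01725815
      * a*b*e^2 + 0.01791972 * a*b*d*f + 0.06128046965 * a*b*d*e + 0.01862825503 * a*b*d^2 +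
      0.01922753465 * a*b*c*f ∧
    0 ≤ 0.01889953465 * a*b*c*e + 0.0191835711 * a*b*c*d + 0.130976568 * a*b*c^2 + 0.211251804 *
      a*b^2*f + 0.01770022935 * a*b^2*e + 0.0182330537 * a*b^2*d + 0.130976568 * a*b^2*c +
      0.01849932 * a*b^3 + 0.01790595 * a^2*f^2 + 0.01840644 * a^2*e*f + 0.04781895 * a^2*e^2 +
      0.018516116 * a^2*d*f ∧
    0 ≤ 0.018516116 * a^2*d*e + 0.01932426465 * a^2*d^2 + 0.017273505 * a^2*c*f + 0.018748225 *
      a^2*c*e + 0.01888570935 * a^2*c*d + 0.018757846 * a^2*c^2 + 0.018748225 * a^2*b*f +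
      0.017273505 * a^2*b*e + 0.01888570935 * a^2*b*d + 0.019548892 * a^2*b*c + 0.018757846 *
      a^2*b^2 + 0.01878012 * a^3*f ∧
    0 ≤ 0.01878012 * a^3*e + 0.018444575 * a^3*d + 0.02072055 * a^3*c + 0.02072055 * a^3*b +
      0.0846039 * a^4 + 0.01902725 * c*f^4 + 0.01902725 * c*e*f^3 + 0.01897275 * c*e^2*f^2 +
      0.01897275 * c*e^3*f + 0.0188665315 * c*d*f^3 + 0.0181334685 * c*d*e^2*f + 0.01862125 *
      c*d^2*f^2 ∧
    0 ≤ 0.01862125 * c*d^2*e*f + 0.0182224475 * c*d^3*f + 0.018336995 * c^2*f^3 + 0.01902725 *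
      c^2*e*f^2 + 0.018690255 * c^2*e^2*f + 0.01881145 * c^2*d*f^2 + 0.0186779815 * c^2*d*e*f +
      0.0209890653 * c^2*d^2*f + 0.0185673 * c^3*f^2 + 0.018904295 * c^3*e*f + 0.0185928812 *
      c^3*d*f + 0.018195606 * c^4*f ∧
    0 ≤ 0.01897275 * b*e*f^3 + 0.01897275 * b*e^2*f^2 + 0.01902725 * b*e^3*f + 0.01902725 *
      b*e^4 + 0.0181334685 * b*d*e*f^2 + 0.0188665315 * b*d*e^3 + 0.01862125 * b*d^2*e*f +
      0.01862125 * b*d^2*e^2 + 0.0182224475 * b*d^3*e + 0.018309745 * b*c*f^3 + 0.018635755 *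
      b*c*e*f^2 + 0.018635755 * b*c*e^2*f ∧
    0 ≤ 0.018309745 * b*c*e^3 + 0.0181874185 * b*c*d*f^2 + 0.0181079 * b*c*d*e*f + 0.0181874185
      * b*c*d*e^2 + 0.0181914603 * b*c*d^2*f + 0.0181914603 * b*c*d^2*e + 0.018555105 * b*c*d^3
      + 0.018663005 * b*c^2*f^2 + 0.018769695 * b*c^2*e*f + 0.018095705 * b*c^2*e^2 +
      0.018743388 * b*c^2*d*f + 0.0181505068 * b*c^2*d*e ∧
    0 ≤ 0.0185769744 * b*c^2*d^2 + 0.018195606 * b*c^3*f + 0.018804394 * b*c^3*e + 0.018391212 *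
      b*c^3*d + 0.018690255 * b^2*e*f^2 + 0.01902725 * b^2*e^2*f + 0.018336995 * b^2*e^3 +
      0.0186779815 * b^2*d*e*f + 0.01781145 * b^2*d*e^2 + 0.0209890653 * b^2*d^2*e + 0.018095705
      * b^2*c*f^2 + 0.018769695 * b^2*c*e*f := by
  refine ⟨?_, ?_, ?_, ?_, ?_, ?_, ?_, ?_, ?_, ?_⟩ <;> positivity

lemma cert_nonneg5 (a b c d e f ta tb tc td te tf : ℝ) (ha : 0 ≤ a) (hb : 0 ≤ b) (hc : 0 ≤ c)
    (hd : 0 ≤ d) (he : 0 ≤ e) (hf : 0 ≤ f) (hta : 0 ≤ ta) (htb : 0 ≤ tb) (htc : 0 ≤ tc)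
    (htd : 0 ≤ td) (hte : 0 ≤ te) (htf : 0 ≤ tf) :
    0 ≤ 0.018663005 * b^2*c*e^2 + 0.0181505068 * b^2*c*d*f + 0.018743388 * b^2*c*d*e +
      0.0185769744 * b^2*c*d^2 + 0.018804394 * b^2*c^2*f + 0.018804394 * b^2*c^2*e + 0.036782424
      * b^2*c^2*d + 0.018904295 * b^3*e*f + 0.0185673 * b^3*e^2 + 0.0185928812 * b^3*d*e +
      0.018804394 * b^3*c*f + 0.018195606 * b^3*c*e ∧
    0 ≤ 0.018391212 * b^3*c*d + 0.018195606 * b^4*e + 0.01902725 * a*d*f^3 + 0.01902725 *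
      a*d*e*f^2 + 0.01902725 * a*d*e^2*f + 0.01902725 * a*d*e^3 + 0.0188665315 * a*d^2*f^2 +
      0.0188665315 * a*d^2*e^2 + 0.01862125 * a*d^3*f + 0.01862125 * a*d^3*e + 0.0192224475 *
      a*d^4 + 0.0187512925 * a*c*f^3 ∧
    0 ≤ 0.0180545 * a*c*e*f^2 + 0.0182487075 * a*c*e^2*f + 0.0179455 * a*c*e^3 + 0.018981079 *
      a*c*d*f^2 + 0.018116229 * a*c*d*e*f + 0.018631182 * a*c*d*e^2 + 0.0182359625 * a*c*d^2*f +
      0.0186779815 * a*c*d^2*e + 0.0209890653 * a*c*d^3 + 0.01894407 * a*c^2*f^2 + 0.0188327125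
      * a*c^2*e*f + 0.01832601 * a*c^2*e^2 ∧
    0 ≤ 0.020534691 * a*c^2*d*f + 0.018904295 * a*c^2*d*e + 0.0185928812 * a*c^2*d^2 +
      0.018613974 * a*c^3*f + 0.018195606 * a*c^3*d + 0.0189455 * a*b*f^3 + 0.0182487075 *
      a*b*e*f^2 + 0.0180545 * a*b*e^2*f + 0.0187512925 * a*b*e^3 + 0.018631182 * a*b*d*f^2 +
      0.018116229 * a*b*d*e*f + 0.018981079 * a*b*d*e^2 ∧
    0 ≤ 0.0186779815 * a*b*d^2*f + 0.0182359625 * a*b*d^2*e + 0.0209890653 * a*b*d^3 +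
      0.0181672875 * a*b*c*f^2 + 0.01845984 * a*b*c*e*f + 0.0181672875 * a*b*c*e^2 + 0.018732906
      * a*b*c*d*f + 0.018732906 * a*b*c*d*e + 0.0183367374 * a*b*c*d^2 + 0.020386026 * a*b*c^2*e
      + 0.018358116 * a*b*c^2*d + 0.01832601 * a*b^2*f^2 ∧
    0 ≤ 0.0188327125 * a*b^2*e*f + 0.01894407 * a*b^2*e^2 + 0.018904295 * a*b^2*d*f +
      0.020534691 * a*b^2*d*e + 0.0185928812 * a*b^2*d^2 + 0.020386026 * a*b^2*c*f + 0.018358116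
      * a*b^2*c*d + 0.018613974 * a*b^3*e + 0.018195606 * a*b^3*d + 0.0187512925 * a^2*d*f^2 +
      0.018812 * a^2*d*e*f + 0.0187512925 * a^2*d*e^2 ∧
    0 ≤ 0.018644084 * a^2*d^2*f + 0.018644084 * a^2*d^2*e + 0.0184245125 * a^2*d^3 + 0.02367828
      * a^2*c*f^2 + 0.018769805 * a^2*c*e*f + 0.018551915 * a^2*c*e^2 + 0.018499175 * a^2*c*d*f
      + 0.0187342575 * a^2*c*d*e + 0.022967391 * a^2*c*d^2 + 0.0190321375 * a^2*c^2*f +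
      0.02554335 * a^2*c^2*e + 0.018613974 * a^2*c^2*d ∧
    0 ≤ 0.018551915 * a^2*b*f^2 + 0.018769805 * a^2*b*e*f + 0.02367828 * a^2*b*e^2 +
      0.0187342575 * a^2*b*d*f + 0.018499175 * a^2*b*d*e + 0.022967391 * a^2*b*d^2 +
      0.0184245125 * a^2*b*c*f + 0.0184245125 * a^2*b*c*e + 0.018227948 * a^2*b*c*d + 0.02554335
      * a^2*b^2*f + 0.0190321375 * a^2*b^2*e + 0.018613974 * a^2*b^2*d ∧
    0 ≤ 0.02367828 * a^3*d*f + 0.02367828 * a^3*d*e + 0.018555105 * a^3*d^2 + 0.021150975 *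
      a^3*c*f + 0.017849025 * a^3*c*e + 0.0180321375 * a^3*c*d + 0.017849025 * a^3*b*f +
      0.021150975 * a^3*b*e + 0.0180321375 * a^3*b*d + 0.021150975 * a^4*d := by
  refine ⟨?_, ?_, ?_, ?_, ?_, ?_, ?_, ?_, ?_⟩ <;> positivity

end Certificate

set_option maxHeartbeats 4000000 in
set_option maxRecDepth 10000 in
/-- The polynomial inequality behind the estimate, in the shifted variables
`a = 8 - x₁`, `b = x₂ - 4`, …, `f = x₆ - 4`. -/
lemma poly_ineq (a b c d e f : ℝ) (ha : 0 ≤ a) (hb : 0 ≤ b) (hc : 0 ≤ c) (hd : 0 ≤ d)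
    (he : 0 ≤ e) (hf : 0 ≤ f) (ha' : a ≤ 1.7) (hb' : b ≤ 2.301) (hc' : c ≤ 2.301)
    (hd' : d ≤ 2.301) (he' : e ≤ 2.301) (hf' : f ≤ 2.301) :
    -0.111 + (a + b + c + d + e + f) ≤
      (32.96 - e - f - 1.414 * d + 3.78 * (b + c) - 3.13 * a) *
        (0.5406 * (cramerNum (8 - a) (4 + b) (4 + c) ((8 - a + b - f) / 2) ((8 - a + c - e) / 2)
              ((4 + b + c - d) / 2) * (0.6666 - 0.036 * (b + c) + 0.05 * d) +
            cramerNum (4 + b) (8 - a) (4 + c) ((8 - a + b - f) / 2) ((4 + b + c - d) / 2)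
              ((8 - a + c - e) / 2) * (0.5 + 0.05 * a + 0.03 * e) +
            cramerNum (4 + c) (8 - a) (4 + b) ((8 - a + c - e) / 2) ((4 + b + c - d) / 2)
              ((8 - a + b - f) / 2) * (0.5 + 0.05 * a + 0.03 * f)) -
          0.001726 * gramDet (8 - a) (4 + b) (4 + c) ((8 - a + b - f) / 2)
            ((8 - a + c - e) / 2) ((4 + b + c - d) / 2) - 0.05522) -
      5.8285 * gramDet (8 - a) (4 + b) (4 + c) ((8 - a + b - f) / 2)
            ((8 - a + c - e) / 2) ((4 + b + c - d) / 2) := by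
  obtain ⟨ta, hta⟩ : ∃ ta, ta = 1.7 - a := ⟨_, rfl⟩
  obtain ⟨tb, htb⟩ : ∃ tb, tb = 2.301 - b := ⟨_, rfl⟩
  obtain ⟨tc, htc⟩ : ∃ tc, tc = 2.301 - c := ⟨_, rfl⟩
  obtain ⟨td, htd⟩ : ∃ td, td = 2.301 - d := ⟨_, rfl⟩
  obtain ⟨te, hte⟩ : ∃ te, te = 2.301 - e := ⟨_, rfl⟩
  obtain ⟨tf, htf⟩ : ∃ tf, tf = 2.301 - f := ⟨_, rfl⟩
  have hta0 : 0 ≤ ta := by linarith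
  have htb0 : 0 ≤ tb := by linarith
  have htc0 : 0 ≤ tc := by linarith
  have htd0 : 0 ≤ td := by linarith
  have hte0 : 0 ≤ te := by linarith
  have htf0 : 0 ≤ tf := by linarith
  obtain ⟨h0, h1, h2, h3, h4, h5, h6, h7, h8, h9⟩ := cert_nonneg0 a b c d e f ta tb tc td te tf
      ha hb hc hd he hf hta0 htb0 htc0 htd0 hte0 htf0
  obtain ⟨h10, h11, h12, h13, h14, h15, h16, h17, h18, h19⟩ := cert_nonneg1 a b c d e f ta tb tc
      td te tf ha hb hc hd he hf hta0 htb0 htc0 htd0 hte0 htf0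
  obtain ⟨h20, h21, h22, h23, h24, h25, h26, h27, h28, h29⟩ := cert_nonneg2 a b c d e f ta tb tc
      td te tf ha hb hc hd he hf hta0 htb0 htc0 htd0 hte0 htf0
  obtain ⟨h30, h31, h32, h33, h34, h35, h36, h37, h38, h39⟩ := cert_nonneg3 a b c d e f ta tb tc
      td te tf ha hb hc hd he hf hta0 htb0 htc0 htd0 hte0 htf0
  obtain ⟨h40, h41, h42, h43, h44, h45, h46, h47, h48, h49⟩ := cert_nonneg4 a b c d e f ta tb tc
      td te tf ha hb hc hd he hf hta0 htb0 htc0 htd0 hte0 htf0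
  obtain ⟨h50, h51, h52, h53, h54, h55, h56, h57, h58⟩ := cert_nonneg5 a b c d e f ta tb tc td
      te tf ha hb hc hd he hf hta0 htb0 htc0 htd0 hte0 htf0
  subst hta htb htc htd hte htf
  unfold cramerNum gramDet
  linear_combination
    h0 + h1 + h2 + h3 + h4 + h5 + h6 + h7 + h8 + h9 + h10 + h11 + h12 + h13 + h14 + h15 +
    h16 + h17 + h18 + h19 + h20 + h21 + h22 + h23 + h24 + h25 + h26 + h27 + h28 + h29 +
    h30 + h31 + h32 + h33 + h34 + h35 + h36 + h37 + h38 + h39 + h40 + h41 + h42 + h43 +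
    h44 + h45 + h46 + h47 + h48 + h49 + h50 + h51 + h52 + h53 + h54 + h55 + h56 + h57 +
    h58


lemma face_bound_a (b c d : ℝ) (hb : 0 ≤ b) (hc : 0 ≤ c) (hd : 0 ≤ d) (hb' : b ≤ 2.301)
    (hc' : c ≤ 2.301) (hd' : d ≤ 2.301) :
    (0.6666 - 0.036 * (b + c) + 0.05 * d) *
      (2 * ((4 + b) * (4 + c) - ((4 + b + c - d) / 2) ^ 2)) ≤
    2 * (4 + b) * (4 + c) - (4 + b + c - d) / 2 * ((4 + b) + (4 + c)) := by
  have hb2 : 0 ≤ 2.301 - b := by linarith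
  have hc2 : 0 ≤ 2.301 - c := by linarith
  have hd2 : 0 ≤ 2.301 - d := by linarith
  linarith [
    mul_nonneg (mul_nonneg hb hb) hc,
    mul_nonneg (mul_nonneg hb hc) hd2,
    mul_nonneg (mul_nonneg hb hb2) hb2,
    mul_nonneg (mul_nonneg hb hb2) hc2,
    mul_nonneg (mul_nonneg hc hb2) hc2,
    mul_nonneg (mul_nonneg hc hc2) hc2,
    mul_nonneg (mul_nonneg hd hb2) hc2,
    mul_nonneg (mul_nonneg hd2 hd2) hd2,
    mul_nonneg hb2 (sq_nonneg (0 * b + 1 * c + -2 * d)),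
    mul_nonneg hc2 (sq_nonneg (1 * b + 0 * c + -2 * d)),
    mul_nonneg hd (sq_nonneg (1 * b + 1 * c + -2 * d)),
    mul_nonneg hc2 (sq_nonneg (1 * b + 2 * c + -2 * d)),
    mul_nonneg hc2 (sq_nonneg (2 * b + -2 * c + -2 * d)),
    mul_nonneg hb2 (sq_nonneg (2 * b + -2 * c + 2 * d)),
    mul_nonneg hb2 (sq_nonneg (2 * b + 1 * c + -2 * d)),
    mul_nonneg hd (sq_nonneg (2 * b + 2 * c + -2 * d)),
    mul_nonneg hb hb,
    mul_nonneg hc hc,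
    mul_nonneg hd hd,
    mul_nonneg hb hc,
    mul_nonneg hb hd,
    mul_nonneg hc hd,
    mul_nonneg (mul_nonneg hb hb) hb,
    mul_nonneg (mul_nonneg hb hb) hd,
    mul_nonneg (mul_nonneg hc hc) hb,
    mul_nonneg (mul_nonneg hc hc) hc,
    mul_nonneg (mul_nonneg hc hc) hd,
    mul_nonneg (mul_nonneg hd hd) hb,
    mul_nonneg (mul_nonneg hd hd) hc,
    mul_nonneg (mul_nonneg hd hd) hd,
    mul_nonneg (mul_nonneg hb hc) hd]

lemma face_bound_b (a c e : ℝ) (ha : 0 ≤ a) (hc : 0 ≤ c) (he : 0 ≤ e) (ha' : a ≤ 1.7)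
    (hc' : c ≤ 2.301) (he' : e ≤ 2.301) :
    (0.5 + 0.05 * a + 0.03 * e) *
      (2 * ((8 - a) * (4 + c) - ((8 - a + c - e) / 2) ^ 2)) ≤
    2 * (8 - a) * (4 + c) - (8 - a + c - e) / 2 * ((8 - a) + (4 + c)) := by
  have ha2 : 0 ≤ 1.7 - a := by linarith
  have hc2 : 0 ≤ 2.301 - c := by linarith
  have he2 : 0 ≤ 2.301 - e := by linarith
  linarith [
    mul_nonneg (mul_nonneg ha ha2) ha2,
    mul_nonneg (mul_nonneg hc ha2) hc2,
    mul_nonneg (mul_nonneg hc hc2) hc2,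
    mul_nonneg (mul_nonneg he ha2) hc2,
    mul_nonneg (mul_nonneg he he2) he2,
    mul_nonneg he2 (sq_nonneg (0 * a + 1 * c + -2 * e)),
    mul_nonneg hc2 (sq_nonneg (0 * a + 2 * c + -2 * e)),
    mul_nonneg ha2 (sq_nonneg (0 * a + 2 * c + 1 * e)),
    mul_nonneg hc2 (sq_nonneg (0 * a + 2 * c + 1 * e)),
    mul_nonneg hc2 (sq_nonneg (0 * a + 2 * c + 2 * e)),
    mul_nonneg he2 (sq_nonneg (1 * a + -1 * c + -2 * e)),
    mul_nonneg hc2 (sq_nonneg (1 * a + 2 * c + -2 * e)),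
    mul_nonneg he2 (sq_nonneg (1 * a + 2 * c + -2 * e)),
    mul_nonneg ha2 (sq_nonneg (2 * a + -2 * c + -1 * e)),
    mul_nonneg ha2 (sq_nonneg (2 * a + -2 * c + 1 * e)),
    mul_nonneg hc (sq_nonneg (2 * a + -2 * c + 2 * e)),
    mul_nonneg he (sq_nonneg (2 * a + -2 * c + 2 * e)),
    mul_nonneg ha2 (sq_nonneg (2 * a + 2 * c + -1 * e)),
    mul_nonneg ha ha,
    mul_nonneg hc hc,
    mul_nonneg he he,
    mul_nonneg ha hc,
    mul_nonneg ha he,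
    mul_nonneg hc he,
    mul_nonneg (mul_nonneg ha ha) ha,
    mul_nonneg (mul_nonneg ha ha) hc,
    mul_nonneg (mul_nonneg ha ha) he,
    mul_nonneg (mul_nonneg hc hc) ha,
    mul_nonneg (mul_nonneg hc hc) hc,
    mul_nonneg (mul_nonneg hc hc) he,
    mul_nonneg (mul_nonneg he he) ha,
    mul_nonneg (mul_nonneg he he) hc,
    mul_nonneg (mul_nonneg he he) he,
    mul_nonneg (mul_nonneg ha hc) he]
/-- The barycentric sum of the circumcenter of a face. -/
def faceSum (xi xj g : ℝ) : ℝ := (2 * xi * xj - g * (xi + xj)) / (2 * (xi * xj - g ^ 2))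

lemma angle_sum_lower (a b c d e f y1 y2 y3 : ℝ) (ha : 0 ≤ a) (hb : 0 ≤ b) (hc : 0 ≤ c)
    (hd : 0 ≤ d) (he : 0 ≤ e) (hf : 0 ≤ f) (ha' : a ≤ 1.7) (hb' : b ≤ 2.301) (hc' : c ≤ 2.301)
    (hd' : d ≤ 2.301) (he' : e ≤ 2.301) (hf' : f ≤ 2.301) (hy1 : 0 < y1) (hy2 : 0 < y2)
    (hy3 : 0 < y3) (h1 : y1 ^ 2 = 8 - a) (h2 : y2 ^ 2 = 4 + b) (h3 : y3 ^ 2 = 4 + c) :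
    32.96 - e - f - 1.414 * d + 3.78 * (b + c) - 3.13 * a ≤
      y1 * y2 * y3 + y1 * ((4 + b + c - d) / 2) + y2 * ((8 - a + c - e) / 2)
        + y3 * ((8 - a + b - f) / 2) := by
  have L1 : 2.828 - 0.1871 * a ≤ y1 := by
    apply le_of_sq_le_sq _ hy1.le
    rw [h1]; nlinarith
  have L2 : 2 + 0.22 * b ≤ y2 := by
    apply le_of_sq_le_sq _ hy2.le
    rw [h2]; nlinarith
  have L3 : 2 + 0.22 * c ≤ y3 := by
    apply le_of_sq_le_sq _ hy3.le
    rw [h3]; nlinarith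
  have p1 : 0 ≤ 2.828 - 0.1871 * a := by linarith
  have p2 : 0 ≤ 2 + 0.22 * b := by linarith
  have p3 : 0 ≤ 2 + 0.22 * c := by linarith
  have e1 : (2.828 - 0.1871 * a) * (2 + 0.22 * b) * (2 + 0.22 * c) ≤ y1 * y2 * y3 := by
    gcongr
  have e2 : (2.828 - 0.1871 * a) * ((4 + b + c - d) / 2) ≤ y1 * ((4 + b + c - d) / 2) :=
    mul_le_mul_of_nonneg_right L1 (by linarith)
  have e3 : (2 + 0.22 * b) * ((8 - a + c - e) / 2) ≤ y2 * ((8 - a + c - e) / 2) :=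
    mul_le_mul_of_nonneg_right L2 (by linarith)
  have e4 : (2 + 0.22 * c) * ((8 - a + b - f) / 2) ≤ y3 * ((8 - a + b - f) / 2) :=
    mul_le_mul_of_nonneg_right L3 (by linarith)
  have ha2 : 0 ≤ 1.7 - a := by linarith
  have q0 := mul_nonneg (mul_nonneg hb hc) p1
  have q1 := mul_nonneg hb ha2
  have q2 := mul_nonneg hc ha2
  have q3 : 0 ≤ b * (2.301 - e) := mul_nonneg hb (by linarith)
  have q4 : 0 ≤ c * (2.301 - f) := mul_nonneg hc (by linarith)
  have q5 := mul_nonneg ha hd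
  have q6 := mul_nonneg hb hc
  nlinarith only [e1, e2, e3, e4, q0, q1, q2, q3, q4, q5, q6, ha, hb, hc, ha']

lemma reduced_ineq (a b c d e f D A m1 m2 m3 : ℝ) (ha : 0 ≤ a) (hb : 0 ≤ b) (hc : 0 ≤ c)
    (hd : 0 ≤ d) (he : 0 ≤ e) (hf : 0 ≤ f) (ha' : a ≤ 1.7) (hb' : b ≤ 2.301) (hc' : c ≤ 2.301)
    (hd' : d ≤ 2.301) (he' : e ≤ 2.301) (hf' : f ≤ 2.301)
    (hcase : 0.2436 ≤ b ∨ 0.2436 ≤ d ∨ 0.3264 ≤ e)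
    (hA : 32.96 - e - f - 1.414 * d + 3.78 * (b + c) - 3.13 * a ≤ A)
    (hm1 : 0.6666 - 0.036 * (b + c) + 0.05 * d ≤ m1)
    (hm2 : 0.5 + 0.05 * a + 0.03 * e ≤ m2) (hm3 : 0.5 + 0.05 * a + 0.03 * f ≤ m3)
    (N1 N2 N3 det : ℝ)
    (eN1 : N1 = cramerNum (8-a) (4+b) (4+c) ((8-a+b-f)/2) ((8-a+c-e)/2) ((4+b+c-d)/2))
    (eN2 : N2 = cramerNum (4+b) (8-a) (4+c) ((8-a+b-f)/2) ((4+b+c-d)/2) ((8-a+c-e)/2))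
    (eN3 : N3 = cramerNum (4+c) (8-a) (4+b) ((8-a+c-e)/2) ((4+b+c-d)/2) ((8-a+b-f)/2))
    (edet : det = gramDet (8-a) (4+b) (4+c) ((8-a+b-f)/2) ((8-a+c-e)/2) ((4+b+c-d)/2))
    (hN1 : 0 ≤ N1) (hN2 : 0 ≤ N2) (hN3 : 0 ≤ N3) (hD : 0 < D) (hDd : D ^ 2 = det) :
    D * (δoct * √2 - 1) + (3 + 2 * √2) * det / A <
      3 / 4 * δoct * (N1 * m1 + N2 * m2 + N3 * m3) := by
  have P := poly_ineq a b c d e f ha hb hc hd he hf ha' hb' hc' hd' he' hf'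
  rw [← eN1, ← eN2, ← eN3, ← edet] at P
  set AA := 32.96 - e - f - 1.414 * d + 3.78 * (b + c) - 3.13 * a with hAA
  have hAA0 : 0 < AA := by rw [hAA]; linarith
  have hdet : 0 < det := by rw [← hDd]; positivity
  obtain ⟨hδ1, hδ2⟩ := delta_bounds
  obtain ⟨_, hs2⟩ := sqrt_two_bounds
  have hsum : 0.111 < a + b + c + d + e + f := by
    rcases hcase with h | h | h <;> linarith
  have s1 : N1 * (0.6666 - 0.036 * (b + c) + 0.05 * d) ≤ N1 * m1 :=
    mul_le_mul_of_nonneg_left hm1 hN1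
  have s2 : N2 * (0.5 + 0.05 * a + 0.03 * e) ≤ N2 * m2 := mul_le_mul_of_nonneg_left hm2 hN2
  have s3 : N3 * (0.5 + 0.05 * a + 0.03 * f) ≤ N3 * m3 := mul_le_mul_of_nonneg_left hm3 hN3
  set W := N1 * (0.6666 - 0.036 * (b + c) + 0.05 * d) + N2 * (0.5 + 0.05 * a + 0.03 * e)
    + N3 * (0.5 + 0.05 * a + 0.03 * f) with hW
  have hW0 : 0 ≤ W := by
    have : 0 ≤ 0.6666 - 0.036 * (b + c) + 0.05 * d := by linarith
    positivity
  have hR : 0.5406 * W ≤ 3 / 4 * δoct * (N1 * m1 + N2 * m2 + N3 * m3) := by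
    have h1 : 0.5406 ≤ 3 / 4 * δoct := by linarith
    have h2 : W ≤ N1 * m1 + N2 * m2 + N3 * m3 := by linarith
    exact mul_le_mul h1 h2 hW0 (by linarith)
  have hDb : D * (δoct * √2 - 1) ≤ 0.001726 * det + 0.05522 := by
    have h1 : D * (δoct * √2 - 1) ≤ D * 0.01952 :=
      mul_le_mul_of_nonneg_left (by linarith) hD.le
    have h2 : D ≤ 0.0884 * det + 2.8285 := by
      rw [← hDd]; nlinarith only [sq_nonneg (0.0884 * D - 0.5)]
    linarith
  have hdiv : (3 + 2 * √2) * det / A ≤ 5.8285 * det / AA := by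
    have h1 : (3 + 2 * √2) * det ≤ 5.8285 * det :=
      mul_le_mul_of_nonneg_right (by linarith) hdet.le
    exact div_le_div₀ (by positivity) h1 hAA0 hA
  have hfin : 5.8285 * det / AA < 0.5406 * W - 0.001726 * det - 0.05522 := by
    rw [div_lt_iff₀ hAA0]
    linarith
  linarith

lemma final_real (a b c d e f D y1 y2 y3 : ℝ) (ha : 0 ≤ a) (hb : 0 ≤ b) (hc : 0 ≤ c)
    (hd : 0 ≤ d) (he : 0 ≤ e) (hf : 0 ≤ f) (ha' : a ≤ 1.7) (hb' : b ≤ 2.301) (hc' : c ≤ 2.301)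
    (hd' : d ≤ 2.301) (he' : e ≤ 2.301) (hf' : f ≤ 2.301)
    (hcase : 0.2436 ≤ b ∨ 0.2436 ≤ d ∨ 0.3264 ≤ e)
    (hy1 : 0 < y1) (hy2 : 0 < y2)
    (hy3 : 0 < y3) (h1 : y1 ^ 2 = 8 - a) (h2 : y2 ^ 2 = 4 + b) (h3 : y3 ^ 2 = 4 + c)
    (N1 N2 N3 det A : ℝ)
    (eN1 : N1 = cramerNum (8-a) (4+b) (4+c) ((8-a+b-f)/2) ((8-a+c-e)/2) ((4+b+c-d)/2))
    (eN2 : N2 = cramerNum (4+b) (8-a) (4+c) ((8-a+b-f)/2) ((4+b+c-d)/2) ((8-a+c-e)/2))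
    (eN3 : N3 = cramerNum (4+c) (8-a) (4+b) ((8-a+c-e)/2) ((4+b+c-d)/2) ((8-a+b-f)/2))
    (edet : det = gramDet (8-a) (4+b) (4+c) ((8-a+b-f)/2) ((8-a+c-e)/2) ((4+b+c-d)/2))
    (eA : A = y1 * y2 * y3 + y1 * ((4 + b + c - d) / 2) + y2 * ((8 - a + c - e) / 2)
        + y3 * ((8 - a + b - f) / 2))
    (hN1 : 0 ≤ N1) (hN2 : 0 ≤ N2) (hN3 : 0 ≤ N3) (hD : 0 < D) (hDd : D ^ 2 = det) :
    2 / 3 * arctan (D / A) < δoct * (D / 12 *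
      (N1 / det * faceSum (4+b) (4+c) ((4+b+c-d)/2) +
       N2 / det * faceSum (8-a) (4+c) ((8-a+c-e)/2) +
       N3 / det * faceSum (8-a) (4+b) ((8-a+b-f)/2))) := by
  have hA := angle_sum_lower a b c d e f y1 y2 y3 ha hb hc hd he hf ha' hb' hc' hd' he' hf'
    hy1 hy2 hy3 h1 h2 h3
  rw [← eA] at hA
  have hA0 : 0 < A := by linarith
  have hm1 : 0.6666 - 0.036 * (b + c) + 0.05 * d ≤ faceSum (4+b) (4+c) ((4+b+c-d)/2) := by
    unfold faceSum
    rw [le_div_iff₀ (by nlinarith)]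
    exact face_bound_a b c d hb hc hd hb' hc' hd'
  have hm2 : 0.5 + 0.05 * a + 0.03 * e ≤ faceSum (8-a) (4+c) ((8-a+c-e)/2) := by
    unfold faceSum
    rw [le_div_iff₀ (by nlinarith)]
    exact face_bound_b a c e ha hc he ha' hc' he'
  have hm3 : 0.5 + 0.05 * a + 0.03 * f ≤ faceSum (8-a) (4+b) ((8-a+b-f)/2) := by
    unfold faceSum
    rw [le_div_iff₀ (by nlinarith)]
    exact face_bound_b a b f ha hb hf ha' hb' hf'
  have R := reduced_ineq a b c d e f D A _ _ _ ha hb hc hd he hf ha' hb' hc' hd' he' hf' hcase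
    hA hm1 hm2 hm3 N1 N2 N3 det eN1 eN2 eN3 edet hN1 hN2 hN3 hD hDd
  set m1 := faceSum (4+b) (4+c) ((4+b+c-d)/2)
  set m2 := faceSum (8-a) (4+c) ((8-a+c-e)/2)
  set m3 := faceSum (8-a) (4+b) ((8-a+b-f)/2)
  have hs : √2 ^ 2 = 2 := Real.sq_sqrt (by norm_num)
  obtain ⟨hl, hu⟩ := sqrt_two_bounds
  have ht0 : 0 < 3 - 2 * √2 := by linarith
  have T := arctan_tangent (t := D / A) (by positivity) ht0
  have e1 : (D / A - (3 - 2 * √2)) / (1 + (3 - 2 * √2) ^ 2) =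
      (3 + 2 * √2) / 6 * (D / A) - 1 / 6 := by
    rw [div_eq_iff (by positivity)]
    have hh : (3 + 2 * √2) * (1 + (3 - 2 * √2) ^ 2) = 6 := by
      linear_combination (8 * √2 - 12) * hs
    have hh2 : (1 + (3 - 2 * √2) ^ 2) = 6 * (3 - 2 * √2) := by
      linear_combination 4 * hs
    linear_combination (-1 / 6 * (D / A)) * hh + 1 / 6 * hh2
  have e2 : arctan (3 - 2 * √2) = δoct * √2 / 6 := by
    rw [delta_eq]; linear_combination (-1 / 2 * arctan (3 - 2 * √2)) * hs
  rw [e1, e2] at T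
  have hdet : det ≠ 0 := by rw [← hDd]; positivity
  have e3 : δoct * (D / 12 * (N1 / det * m1 + N2 / det * m2 + N3 / det * m3)) =
      (3 / 4 * δoct * (N1 * m1 + N2 * m2 + N3 * m3)) / (9 * D) := by
    rw [← hDd]; field_simp; ring
  rw [e3, lt_div_iff₀ (by positivity)]
  calc 2 / 3 * arctan (D / A) * (9 * D)
      ≤ 2 / 3 * (δoct * √2 / 6 + ((3 + 2 * √2) / 6 * (D / A) - 1 / 6)) * (9 * D) := by gcongr
    _ = D * (δoct * √2 - 1) + (3 + 2 * √2) * det / A := by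
        rw [← hDd]; field_simp; ring
    _ < _ := R
lemma gram_product_identity (y1 y2 y3 p q r D : ℝ)
    (hD : D ^ 2 = gramDet (y1 ^ 2) (y2 ^ 2) (y3 ^ 2) p q r) :
    (⟨y1 ^ 2 * r - p * q, y1 * D⟩ : ℂ) * ⟨y2 ^ 2 * q - p * r, y2 * D⟩ *
      ⟨y3 ^ 2 * p - q * r, y3 * D⟩ =
    -(((y1 * y2 - p) * (y1 * y3 - q) * (y2 * y3 - r) / 2 : ℝ) : ℂ) *
      (⟨y1 * y2 * y3 + y1 * r + y2 * q + y3 * p, D⟩ : ℂ) ^ 2 := by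
  unfold gramDet at hD
  rw [sq (⟨_, _⟩ : ℂ)]
  apply Complex.ext
  · simp only [Complex.mul_re, Complex.mul_im, Complex.neg_re, Complex.neg_im, Complex.ofReal_re,
      Complex.ofReal_im]
    linear_combination (-((y1 ^ 2 * r - p * q) * y2 * y3 + (y2 ^ 2 * q - p * r) * y1 * y3 +
      (y3 ^ 2 * p - q * r) * y1 * y2) - (y1 * y2 - p) * (y1 * y3 - q) * (y2 * y3 - r) / 2) * hD
  · simp only [Complex.mul_re, Complex.mul_im, Complex.neg_re, Complex.neg_im, Complex.ofReal_re,
      Complex.ofReal_im]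
    linear_combination (-y1 * y2 * y3 * D) * hD

lemma arg_sum_eq (z1 z2 z3 w : ℂ) (K : ℝ) (hK : 0 < K) (h1 : 0 < z1.im) (h2 : 0 < z2.im)
    (h3 : 0 < z3.im) (hwr : 0 < w.re) (hwi : 0 < w.im) (h : z1 * z2 * z3 = -(K : ℂ) * w ^ 2) :
    z1.arg + z2.arg + z3.arg = π + 2 * arctan (w.im / w.re) := by
  have bd : ∀ z : ℂ, 0 < z.im → 0 < z.arg ∧ z.arg < π := by
    intro z hz
    refine ⟨?_, ?_⟩
    · rcases (Complex.arg_nonneg_iff.2 hz.le).lt_or_eq with h | h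
      · exact h
      · exact absurd (Complex.arg_eq_zero_iff.1 h.symm).2 hz.ne'
    · exact Complex.arg_lt_pi_iff.2 (Or.inr hz.ne')
  have hw : w.arg = arctan (w.im / w.re) := by
    rw [Complex.arg_of_re_nonneg hwr.le]
    have hn : 0 < ‖w‖ := by
      rw [norm_pos_iff]; intro h0; rw [h0] at hwr; simp at hwr
    have hsq : ‖w‖ ^ 2 = w.re ^ 2 + w.im ^ 2 := by
      rw [Complex.sq_norm, Complex.normSq_apply]; ring
    rw [arcsin_eq_arctan]
    · congr 1
      have : √(1 - (w.im / ‖w‖) ^ 2) = w.re / ‖w‖ := by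
        rw [Real.sqrt_eq_iff_mul_self_eq_of_pos (by positivity)]
        field_simp; rw [hsq]; ring
      rw [this]; field_simp
    · constructor
      · have : 0 < w.im / ‖w‖ := by positivity
        linarith
      · rw [div_lt_one hn]; nlinarith
  rw [← hw]
  have hwb := bd w hwi
  have hw2 : w.arg < π / 2 := by rw [hw]; exact arctan_lt_pi_div_two _
  obtain ⟨a1, b1⟩ := bd z1 h1
  obtain ⟨a2, b2⟩ := bd z2 h2
  obtain ⟨a3, b3⟩ := bd z3 h3
  have key : cos (z1.arg + z2.arg + z3.arg - (π + 2 * w.arg)) = 1 := by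
    have hnorm : ‖z1‖ * ‖z2‖ * ‖z3‖ = K * ‖w‖ ^ 2 := by
      have := congrArg norm h
      simpa [abs_of_pos hK] using this
    have hn : 0 < K * ‖w‖ ^ 2 := by
      have : 0 < ‖w‖ := by
        rw [norm_pos_iff]; intro h0; rw [h0] at hwr; simp at hwr
      positivity
    have e1 : ((K * ‖w‖ ^ 2 : ℝ) : ℂ) * Complex.exp ((z1.arg + z2.arg + z3.arg : ℝ) * Complex.I) =
        ((K * ‖w‖ ^ 2 : ℝ) : ℂ) * Complex.exp ((π + 2 * w.arg : ℝ) * Complex.I) := by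
      have l : z1 * z2 * z3 = ((K * ‖w‖ ^ 2 : ℝ) : ℂ) *
          Complex.exp ((z1.arg + z2.arg + z3.arg : ℝ) * Complex.I) := by
        rw [← hnorm]
        conv_lhs => rw [← Complex.norm_mul_exp_arg_mul_I z1, ← Complex.norm_mul_exp_arg_mul_I z2,
          ← Complex.norm_mul_exp_arg_mul_I z3]
        push_cast
        rw [add_mul, add_mul, Complex.exp_add, Complex.exp_add]; ring
      have r : -(K : ℂ) * w ^ 2 = ((K * ‖w‖ ^ 2 : ℝ) : ℂ) *
          Complex.exp ((π + 2 * w.arg : ℝ) * Complex.I) := by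
        conv_lhs => rw [← Complex.norm_mul_exp_arg_mul_I w]
        push_cast
        rw [add_mul, Complex.exp_add, Complex.exp_pi_mul_I, mul_assoc 2, two_mul (_ * _),
          Complex.exp_add]; ring
      rw [← l, ← r, h]
    have e2 := mul_left_cancel₀ (by exact_mod_cast hn.ne') e1
    have e3 := congrArg Complex.re e2
    have e4 := congrArg Complex.im e2
    rw [Complex.exp_ofReal_mul_I_re, Complex.exp_ofReal_mul_I_re] at e3
    rw [Complex.exp_ofReal_mul_I_im, Complex.exp_ofReal_mul_I_im] at e4
    rw [cos_sub, e3, e4]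
    nlinarith [sin_sq_add_cos_sq (π + 2 * w.arg)]
  have := (cos_eq_one_iff_of_lt_of_lt (by linarith) (by linarith)).1 key
  linarith
/-- Radial integral attached to the unit ball in cylindrical coordinates. -/
def radialI : ENNReal :=
  ∫⁻ r in Set.Ioi (0 : ℝ), ENNReal.ofReal r * volume {z : ℝ | z ^ 2 + r ^ 2 ≤ 1}

lemma measurableSet_cylPiece (P : Set (ℝ × ℝ)) (hP : MeasurableSet P) :
    MeasurableSet {q : ℝ × (ℝ × ℝ) | q.2 ∈ P ∧ q.1 ^ 2 + (q.2.1 ^ 2 + q.2.2 ^ 2) ≤ 1} := by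
  have h1 : MeasurableSet {q : ℝ × (ℝ × ℝ) | q.1 ^ 2 + (q.2.1 ^ 2 + q.2.2 ^ 2) ≤ 1} :=
    measurableSet_le (by fun_prop) (by fun_prop)
  have h2 : MeasurableSet (Prod.snd ⁻¹' P : Set (ℝ × (ℝ × ℝ))) := measurable_snd hP
  exact h2.inter h1

lemma cyl_volume (P : Set (ℝ × ℝ)) (hP : MeasurableSet P) (Θ : Set ℝ) (hΘ : MeasurableSet Θ)
    (h : ∀ r θ : ℝ, 0 < r → ((r * cos θ, r * sin θ) ∈ P ↔ θ ∈ Θ)) :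
    volume {q : ℝ × (ℝ × ℝ) | q.2 ∈ P ∧ q.1 ^ 2 + (q.2.1 ^ 2 + q.2.2 ^ 2) ≤ 1} =
      radialI * volume (Θ ∩ Set.Ioo (-π) π) := by
  have hm1 : MeasurableSet {q : ℝ × ℝ | q.1 ^ 2 + q.2 ^ 2 ≤ 1} :=
    measurableSet_le (by fun_prop) (by fun_prop)
  have hmf : Measurable fun r : ℝ => volume {z : ℝ | z ^ 2 + r ^ 2 ≤ 1} :=
    measurable_measure_prodMk_right hm1
  have hms : MeasurableSet {q : ℝ × (ℝ × ℝ) | q.2 ∈ P ∧ q.1 ^ 2 + (q.2.1 ^ 2 + q.2.2 ^ 2) ≤ 1} :=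
    measurableSet_cylPiece P hP
  rw [Measure.volume_eq_prod, Measure.prod_apply_symm hms, ← lintegral_comp_polarCoord_symm]
  rw [polarCoord_target]
  have step : ∀ p ∈ Set.Ioi (0 : ℝ) ×ˢ Set.Ioo (-π) π,
      ENNReal.ofReal p.1 • volume ((fun x => (x, polarCoord.symm p)) ⁻¹'
        {q : ℝ × (ℝ × ℝ) | q.2 ∈ P ∧ q.1 ^ 2 + (q.2.1 ^ 2 + q.2.2 ^ 2) ≤ 1}) =
      (ENNReal.ofReal p.1 * volume {z : ℝ | z ^ 2 + p.1 ^ 2 ≤ 1}) * Θ.indicator 1 p.2 := by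
    rintro ⟨r, θ⟩ ⟨hr, -⟩
    have hr' : 0 < r := hr
    simp only [polarCoord_symm_apply, smul_eq_mul]
    rw [mul_assoc]
    congr 1
    have hsum : (r * cos θ) ^ 2 + (r * sin θ) ^ 2 = r ^ 2 := by
      nlinarith [sin_sq_add_cos_sq θ]
    by_cases hθ : θ ∈ Θ
    · rw [Set.indicator_of_mem hθ]
      simp only [Pi.one_apply, mul_one]
      congr 1
      ext z
      simp only [Set.mem_preimage, Set.mem_ofPred_eq, hsum, (h r θ hr').2 hθ, true_and]
    · rw [Set.indicator_of_notMem hθ, mul_zero]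
      have hne : ¬ (r * cos θ, r * sin θ) ∈ P := fun hh => hθ ((h r θ hr').1 hh)
      have : ((fun x : ℝ => (x, (r * cos θ, r * sin θ))) ⁻¹'
        {q : ℝ × (ℝ × ℝ) | q.2 ∈ P ∧ q.1 ^ 2 + (q.2.1 ^ 2 + q.2.2 ^ 2) ≤ 1}) = ∅ := by
        ext z
        simp [hne]
      rw [this, measure_empty]
  rw [setLIntegral_congr_fun (measurableSet_Ioi.prod measurableSet_Ioo) step,
    Measure.volume_eq_prod, ← Measure.prod_restrict,
    lintegral_prod_mul (f := fun r : ℝ => ENNReal.ofReal r * volume {z : ℝ | z ^ 2 + r ^ 2 ≤ 1})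
      (g := Θ.indicator 1)]
  · unfold radialI
    rw [lintegral_indicator_one hΘ, Measure.restrict_apply hΘ]
  · exact ((ENNReal.measurable_ofReal).mul hmf).aemeasurable
  · exact (measurable_one.indicator hΘ).aemeasurable

lemma cyl_volume_E3 (b : OrthonormalBasis (Fin 3) ℝ E3) (P : Set (ℝ × ℝ)) (hP : MeasurableSet P)
    (Θ : Set ℝ) (hΘ : MeasurableSet Θ)
    (h : ∀ r θ : ℝ, 0 < r → ((r * cos θ, r * sin θ) ∈ P ↔ θ ∈ Θ)) :
    volume {x : E3 | (b.repr x 0, b.repr x 1) ∈ P ∧ ‖x‖ ≤ 1} =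
      radialI * volume (Θ ∩ Set.Ioo (-π) π) := by
  rw [← cyl_volume P hP Θ hΘ h]
  have m1 := b.measurePreserving_repr
  have m2 := PiLp.volume_preserving_ofLp (Fin 3)
  have m3 := volume_preserving_piFinSuccAbove (fun _ : Fin 3 => ℝ) 2
  have m4 : MeasurePreserving (Prod.map id MeasurableEquiv.finTwoArrow)
      (volume : Measure (ℝ × (Fin 2 → ℝ))) (volume : Measure (ℝ × (ℝ × ℝ))) :=
    (MeasurePreserving.id volume).prod (volume_preserving_finTwoArrow ℝ)
  have m := m4.comp (m3.comp (m2.comp m1))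
  rw [← m.measure_preimage]
  · congr 1
    ext x
    have hn : ‖x‖ ≤ 1 ↔ b.repr x 2 ^ 2 + (b.repr x 0 ^ 2 + b.repr x 1 ^ 2) ≤ 1 := by
      rw [← b.repr.norm_map x, EuclideanSpace.norm_eq, Fin.sum_univ_three, Real.sqrt_le_one]
      simp only [Real.norm_eq_abs, sq_abs]
      constructor <;> intro h <;> linarith
    simp only [Set.mem_ofPred_eq, hn]
    rfl
  · refine MeasurableSet.nullMeasurableSet ?_
    exact measurableSet_cylPiece P hP

lemma radialI_eq : radialI = ENNReal.ofReal (2 / 3) := by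
  have h := cyl_volume_E3 (EuclideanSpace.basisFun (Fin 3) ℝ) Set.univ MeasurableSet.univ Set.univ
    MeasurableSet.univ (by simp)
  have hb : {x : E3 | ((EuclideanSpace.basisFun (Fin 3) ℝ).repr x 0,
      (EuclideanSpace.basisFun (Fin 3) ℝ).repr x 1) ∈ (Set.univ : Set (ℝ × ℝ)) ∧ ‖x‖ ≤ 1} =
      Metric.closedBall 0 1 := by
    ext x; simp
  rw [hb, EuclideanSpace.volume_closedBall_fin_three, Set.univ_inter, Real.volume_Ioo] at h
  have hp := pi_pos
  have e1 : ENNReal.ofReal (π * 4 / 3) = ENNReal.ofReal (2 / 3) * ENNReal.ofReal (π - -π) := by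
    rw [← ENNReal.ofReal_mul (by norm_num)]; congr 1; ring
  rw [ENNReal.ofReal_one, one_pow, one_mul, e1] at h
  refine ((ENNReal.mul_left_inj ?_ ENNReal.ofReal_ne_top).1 h).symm
  rw [Ne, ENNReal.ofReal_eq_zero]; linarith

lemma lune_angles (β : ℝ) (hβ : |β| < π) (θ : ℝ) (h1 : -π < θ) (h2 : θ < π) (hc : 0 ≤ cos θ)
    (hd : 0 ≤ cos (θ - β)) : θ ∈ Set.Icc (max (-(π / 2)) (β - π / 2)) (min (π / 2) (β + π / 2)) := by
  obtain ⟨hb1, hb2⟩ := abs_lt.1 hβ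
  have a1 : θ ≤ π / 2 := by
    by_contra hh; push Not at hh
    linarith [cos_neg_of_pi_div_two_lt_of_lt hh (by linarith)]
  have a2 : -(π / 2) ≤ θ := by
    by_contra hh; push Not at hh
    have := cos_neg_of_pi_div_two_lt_of_lt (x := -θ) (by linarith) (by linarith)
    rw [cos_neg] at this; linarith
  have a3 : θ ≤ β + π / 2 := by
    by_contra hh; push Not at hh
    linarith [cos_neg_of_pi_div_two_lt_of_lt (x := θ - β) (by linarith) (by linarith)]
  have a4 : β - π / 2 ≤ θ := by
    by_contra hh; push Not at hh
    have := cos_neg_of_pi_div_two_lt_of_lt (x := -(θ - β)) (by linarith) (by linarith)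
    rw [cos_neg] at this; linarith
  exact ⟨max_le a2 a4, le_min a1 a3⟩

open InnerProductGeometry in
lemma lune_le (u v : E3) (hu : u ≠ 0) (hv : v ≠ 0) (hπ : angle u v ≠ π) :
    volume (Metric.closedBall (0 : E3) 1 ∩ {x | 0 ≤ inner ℝ u x} ∩ {x | 0 ≤ inner ℝ v x}) ≤
      ENNReal.ofReal (2 / 3 * (π - angle u v)) := by
  have hfr : Module.finrank ℝ E3 = Fintype.card (Fin 3) := by simp
  set f : Fin 3 → E3 := ![u, v, 0] with hf
  set b := InnerProductSpace.gramSchmidtOrthonormalBasis hfr f with hb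
  have t20 : inner ℝ (b 2) u = 0 :=
    InnerProductSpace.gramSchmidtOrthonormalBasis_inv_triangular hfr f (i := 0) (j := 2) (by decide)
  have t10 : inner ℝ (b 1) u = 0 :=
    InnerProductSpace.gramSchmidtOrthonormalBasis_inv_triangular hfr f (i := 0) (j := 1) (by decide)
  have t21 : inner ℝ (b 2) v = 0 :=
    InnerProductSpace.gramSchmidtOrthonormalBasis_inv_triangular hfr f (i := 1) (j := 2) (by decide)
  have hgs : InnerProductSpace.gramSchmidt ℝ f 0 = u := by
    have := InnerProductSpace.gramSchmidt_bot (𝕜 := ℝ) f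
    exact this
  have hun : 0 < ‖u‖ := norm_pos_iff.2 hu
  have hvn : 0 < ‖v‖ := norm_pos_iff.2 hv
  have hnm : InnerProductSpace.gramSchmidtNormed ℝ f 0 = ‖u‖⁻¹ • u := by
    simp [InnerProductSpace.gramSchmidtNormed, hgs]
  have hb0 : b 0 = ‖u‖⁻¹ • u := by
    rw [hb, InnerProductSpace.gramSchmidtOrthonormalBasis_apply hfr, hnm]
    rw [hnm]; simp [hu]
  have inner_eq : ∀ w x : E3, inner ℝ w x = inner ℝ (b 0) w * b.repr x 0 +
      inner ℝ (b 1) w * b.repr x 1 + inner ℝ (b 2) w * b.repr x 2 := by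
    intro w x
    rw [← b.repr.inner_map_map w x, PiLp.inner_apply, Fin.sum_univ_three]
    simp only [b.repr_apply_apply]
    simp [mul_comm]
  have u0 : inner ℝ (b 0) u = ‖u‖ := by
    rw [hb0, inner_smul_left, real_inner_self_eq_norm_sq]; simp; field_simp
  obtain ⟨v0, hv0⟩ : ∃ t, t = inner ℝ (b 0) v := ⟨_, rfl⟩
  obtain ⟨v1, hv1⟩ : ∃ t, t = inner ℝ (b 1) v := ⟨_, rfl⟩
  have hvsq : ‖v‖ ^ 2 = v0 ^ 2 + v1 ^ 2 := by
    rw [← real_inner_self_eq_norm_sq, inner_eq v v]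
    simp only [b.repr_apply_apply, ← hv0, ← hv1, t21]; ring
  set w : ℂ := ⟨v0, v1⟩ with hw
  have hwn : ‖w‖ = ‖v‖ := by
    rw [← sq_eq_sq₀ (norm_nonneg _) (norm_nonneg _), Complex.sq_norm, Complex.normSq_apply, hvsq]
    simp [hw]; ring
  have hw0 : w ≠ 0 := by rw [← norm_pos_iff, hwn]; exact hvn
  have hcos : v0 = ‖v‖ * cos w.arg := by
    rw [Complex.cos_arg hw0, hwn]; simp [hw]; field_simp
  have hsin : v1 = ‖v‖ * sin w.arg := by
    rw [Complex.sin_arg, hwn]; simp [hw]; field_simp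
  have hang : angle u v = |w.arg| := by
    unfold angle
    have : inner ℝ u v = ‖u‖ * v0 := by
      rw [hv0, hb0, inner_smul_left]; simp; field_simp
    rw [this, hcos, show ‖u‖ * (‖v‖ * cos w.arg) / (‖u‖ * ‖v‖) = cos w.arg by field_simp,
      ← cos_abs, arccos_cos (abs_nonneg _) (Complex.abs_arg_le_pi w)]
  have hlt : |w.arg| < π := lt_of_le_of_ne (Complex.abs_arg_le_pi w) (hang ▸ hπ)
  set P : Set (ℝ × ℝ) := {q | 0 ≤ ‖u‖ * q.1 ∧ 0 ≤ v0 * q.1 + v1 * q.2} with hP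
  set Θ : Set ℝ := {θ | 0 ≤ cos θ ∧ 0 ≤ cos (θ - w.arg)} with hΘ
  have hPm : MeasurableSet P :=
    (measurableSet_le (f := fun _ => (0 : ℝ)) (g := fun q : ℝ × ℝ => ‖u‖ * q.1)
      (by fun_prop) (by fun_prop)).inter
      (measurableSet_le (f := fun _ => (0 : ℝ)) (g := fun q : ℝ × ℝ => v0 * q.1 + v1 * q.2)
        (by fun_prop) (by fun_prop))
  have hΘm : MeasurableSet Θ :=
    (measurableSet_le (f := fun _ => (0 : ℝ)) (g := fun θ : ℝ => cos θ)
      (by fun_prop) (by fun_prop)).inter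
      (measurableSet_le (f := fun _ => (0 : ℝ)) (g := fun θ : ℝ => cos (θ - w.arg))
        (by fun_prop) (by fun_prop))
  have hcyl := cyl_volume_E3 b P hPm Θ hΘm (by
    intro r θ hr
    simp only [hP, hΘ, Set.mem_ofPred_eq]
    have e1 : ‖u‖ * (r * cos θ) = (‖u‖ * r) * cos θ := by ring
    have e2 : v0 * (r * cos θ) + v1 * (r * sin θ) = (‖v‖ * r) * cos (θ - w.arg) := by
      rw [cos_sub]; rw [hcos, hsin]; ring
    rw [e1, e2, mul_nonneg_iff_of_pos_left (by positivity),
      mul_nonneg_iff_of_pos_left (by positivity)])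
  have hset : Metric.closedBall (0 : E3) 1 ∩ {x | 0 ≤ inner ℝ u x} ∩ {x | 0 ≤ inner ℝ v x} =
      {x : E3 | (b.repr x 0, b.repr x 1) ∈ P ∧ ‖x‖ ≤ 1} := by
    ext x
    simp only [Set.mem_inter_iff, mem_closedBall_zero_iff, Set.mem_ofPred_eq, hP]
    rw [inner_eq u x, inner_eq v x, u0, t10, t20, t21, ← hv0, ← hv1]
    simp only [zero_mul, add_zero]
    tauto
  rw [hset, hcyl, radialI_eq, ENNReal.ofReal_mul (by norm_num), hang]
  gcongr
  refine (measure_mono (t := Set.Icc (max (-(π / 2)) (w.arg - π / 2))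
    (min (π / 2) (w.arg + π / 2))) ?_).trans ?_
  · rintro θ ⟨⟨h1, h2⟩, h3, h4⟩
    exact lune_angles w.arg hlt θ h3 h4 h1 h2
  · rw [Real.volume_Icc]
    apply ENNReal.ofReal_le_ofReal
    rcases abs_cases w.arg with ⟨h, _⟩ | ⟨h, _⟩ <;> rw [h]
    · have := min_le_left (π / 2) (w.arg + π / 2)
      have := le_max_right (-(π / 2)) (w.arg - π / 2)
      linarith
    · have := min_le_right (π / 2) (w.arg + π / 2)
      have := le_max_left (-(π / 2)) (w.arg - π / 2)
      linarith
lemma prop_cover (a b c u v w : Prop) (h1 : ¬a → u) (h2 : ¬b → v) (h3 : ¬c → w) :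
    ((((a ∧ b) ∧ c ∨ (a ∧ b) ∧ ¬c) ∨ (a ∧ c) ∧ ¬b) ∨ (b ∧ c) ∧ ¬a) ∨
    ((((u ∧ v) ∧ w ∨ (u ∧ v) ∧ ¬w) ∨ (u ∧ w) ∧ ¬v) ∨ (v ∧ w) ∧ ¬u) := by
  by_cases a <;> by_cases b <;> by_cases c <;> by_cases u <;> by_cases v <;> by_cases w <;> simp_all

lemma girard_bound (n1 n2 n3 : E3) :
    2 * volume.real (Metric.closedBall (0 : E3) 1 ∩ {x | 0 ≤ inner ℝ n1 x} ∩
      {x | 0 ≤ inner ℝ n2 x} ∩ {x | 0 ≤ inner ℝ n3 x}) + 2 * π / 3 ≤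
    volume.real (Metric.closedBall (0 : E3) 1 ∩ {x | 0 ≤ inner ℝ n1 x} ∩ {x | 0 ≤ inner ℝ n2 x}) +
    volume.real (Metric.closedBall (0 : E3) 1 ∩ {x | 0 ≤ inner ℝ n1 x} ∩ {x | 0 ≤ inner ℝ n3 x}) +
    volume.real (Metric.closedBall (0 : E3) 1 ∩ {x | 0 ≤ inner ℝ n2 x} ∩
      {x | 0 ≤ inner ℝ n3 x}) := by
  set B : Set E3 := Metric.closedBall (0 : E3) 1 with hB
  set H1 : Set E3 := {x | 0 ≤ inner ℝ n1 x} with hH1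
  set H2 : Set E3 := {x | 0 ≤ inner ℝ n2 x} with hH2
  set H3 : Set E3 := {x | 0 ≤ inner ℝ n3 x} with hH3
  have hm : ∀ n : E3, MeasurableSet {x : E3 | 0 ≤ inner ℝ n x} := fun n =>
    measurableSet_le (by fun_prop) (by fun_prop)
  have hfin : volume B ≠ ⊤ := measure_closedBall_lt_top.ne
  have fin : ∀ S : Set E3, S ⊆ B → volume S ≠ ⊤ := fun S hS =>
    ne_top_of_le_ne_top hfin (measure_mono hS)
  have hBv : volume.real B = 4 * π / 3 := by
    rw [measureReal_def, hB, EuclideanSpace.volume_closedBall_fin_three, ENNReal.ofReal_one,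
      one_pow, one_mul, ENNReal.toReal_ofReal (by positivity)]
    ring
  have s3 := measureReal_inter_add_sdiff (μ := volume) (s := B ∩ H1 ∩ H2) (t := H3) (hm n3)
    (fin _ (fun x hx => hx.1.1))
  have s2 := measureReal_inter_add_sdiff (μ := volume) (s := B ∩ H1 ∩ H3) (t := H2) (hm n2)
    (fin _ (fun x hx => hx.1.1))
  have s1 := measureReal_inter_add_sdiff (μ := volume) (s := B ∩ H2 ∩ H3) (t := H1) (hm n1)
    (fin _ (fun x hx => hx.1.1))
  have e2 : B ∩ H1 ∩ H3 ∩ H2 = B ∩ H1 ∩ H2 ∩ H3 := by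
    ext x; simp only [Set.mem_inter_iff]; tauto
  have e1 : B ∩ H2 ∩ H3 ∩ H1 = B ∩ H1 ∩ H2 ∩ H3 := by
    ext x; simp only [Set.mem_inter_iff]; tauto
  rw [e2] at s2
  rw [e1] at s1
  set T := B ∩ H1 ∩ H2 ∩ H3
  set M : Set E3 := T ∪ (B ∩ H1 ∩ H2) \ H3 ∪ (B ∩ H1 ∩ H3) \ H2 ∪ (B ∩ H2 ∩ H3) \ H1 with hM
  have hMB : M ⊆ B := by
    intro x hx
    simp only [hM, T, Set.mem_union, Set.mem_inter_iff, Set.mem_sdiff] at hx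
    tauto
  have hMle : volume.real M ≤ volume.real T + volume.real ((B ∩ H1 ∩ H2) \ H3) +
      volume.real ((B ∩ H1 ∩ H3) \ H2) + volume.real ((B ∩ H2 ∩ H3) \ H1) := by
    refine (measureReal_union_le _ _).trans ?_
    gcongr
    refine (measureReal_union_le _ _).trans ?_
    gcongr
    exact measureReal_union_le _ _
  have hneg : volume.real (-M) = volume.real M := by
    rw [measureReal_def, Measure.measure_neg, measureReal_def]
  have hcov : B ⊆ M ∪ -M := by
    intro x hx
    have hx' : -x ∈ B := by simpa [hB] using hx
    simp only [hM, T, Set.mem_union, Set.mem_inter_iff, Set.mem_sdiff, Set.mem_neg, hx, hx',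
      true_and]
    have f : ∀ n : E3, x ∉ ({x | 0 ≤ inner ℝ n x} : Set E3) →
        -x ∈ ({x | 0 ≤ inner ℝ n x} : Set E3) := by
      intro n hn
      simp only [Set.mem_ofPred_eq, not_le, inner_neg_right] at hn ⊢
      linarith
    have f1 := f n1
    have f2 := f n2
    have f3 := f n3
    rw [← hH1] at f1
    rw [← hH2] at f2
    rw [← hH3] at f3
    exact prop_cover _ _ _ _ _ _ f1 f2 f3
  have hBle : volume.real B ≤ volume.real M + volume.real M := by
    calc volume.real B ≤ volume.real (M ∪ -M) := by
          refine measureReal_mono hcov ?_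
          refine (measure_union_lt_top (fin M hMB).lt_top ?_).ne
          rw [Measure.measure_neg]; exact (fin M hMB).lt_top
      _ ≤ volume.real M + volume.real (-M) := measureReal_union_le _ _
      _ = _ := by rw [hneg]
  linarith

open InnerProductGeometry in
lemma trihedral_le (n1 n2 n3 : E3) (h1 : n1 ≠ 0) (h2 : n2 ≠ 0) (h3 : n3 ≠ 0)
    (h12 : angle n1 n2 ≠ π) (h13 : angle n1 n3 ≠ π) (h23 : angle n2 n3 ≠ π) :
    volume.real (Metric.closedBall (0 : E3) 1 ∩ {x | 0 ≤ inner ℝ n1 x} ∩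
      {x | 0 ≤ inner ℝ n2 x} ∩ {x | 0 ≤ inner ℝ n3 x}) ≤
    ((π - angle n1 n2) + (π - angle n1 n3) + (π - angle n2 n3) - π) / 3 := by
  have G := girard_bound n1 n2 n3
  have l : ∀ u v : E3, u ≠ 0 → v ≠ 0 → angle u v ≠ π → volume.real (Metric.closedBall (0 : E3) 1 ∩
      {x | 0 ≤ inner ℝ u x} ∩ {x | 0 ≤ inner ℝ v x}) ≤ 2 / 3 * (π - angle u v) := by
    intro u v hu hv hp
    rw [measureReal_def]
    refine ENNReal.toReal_le_of_le_ofReal ?_ (lune_le u v hu hv hp)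
    linarith [angle_le_pi u v]
  linarith [l n1 n2 h1 h2 h12, l n1 n3 h1 h3 h13, l n2 n3 h2 h3 h23]
open InnerProductGeometry in
lemma angle_arg (n m : E3) (z : ℂ) (c : ℝ) (hc : 0 < c) (h : inner ℝ n m = -(c * z.re))
    (hn : ‖n‖ ^ 2 * ‖m‖ ^ 2 = c ^ 2 * (z.re ^ 2 + z.im ^ 2)) (him : 0 < z.im) :
    π - angle n m = z.arg ∧ angle n m ≠ π := by
  have hz : z ≠ 0 := by intro h0; rw [h0] at him; simp at him
  have hzn : 0 < ‖z‖ := norm_pos_iff.2 hz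
  have hnm : ‖n‖ * ‖m‖ = c * ‖z‖ := by
    rw [← sq_eq_sq₀ (by positivity) (by positivity), mul_pow, mul_pow, hn, Complex.sq_norm,
      Complex.normSq_apply]
    ring
  have key : π - angle n m = z.arg := by
    unfold angle
    rw [hnm, h, Complex.arg_of_im_nonneg_of_ne_zero him.le hz,
      show -(c * z.re) / (c * ‖z‖) = -(z.re / ‖z‖) by field_simp, arccos_neg]
    ring
  refine ⟨key, fun h0 => ?_⟩
  rw [h0, sub_self] at key
  exact him.ne' (Complex.arg_eq_zero_iff.1 key.symm).2

lemma solid_angle_bound (v1 v2 v3 : E3) (y1 y2 y3 p q r D : ℝ)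
    (hy1 : 0 < y1) (hy2 : 0 < y2) (hy3 : 0 < y3)
    (e11 : inner ℝ v1 v1 = y1 ^ 2) (e22 : inner ℝ v2 v2 = y2 ^ 2) (e33 : inner ℝ v3 v3 = y3 ^ 2)
    (e12 : inner ℝ v1 v2 = p) (e13 : inner ℝ v1 v3 = q) (e23 : inner ℝ v2 v3 = r)
    (hp : p < y1 * y2) (hq : q < y1 * y3) (hr : r < y2 * y3) (hD : 0 < D)
    (hDd : D ^ 2 = gramDet (y1 ^ 2) (y2 ^ 2) (y3 ^ 2) p q r)
    (hA : 0 < y1 * y2 * y3 + y1 * r + y2 * q + y3 * p) :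
    volume.real (Metric.closedBall (0 : E3) 1 ∩
      {x | ∃ a b c : ℝ, 0 ≤ a ∧ 0 ≤ b ∧ 0 ≤ c ∧ x = a • v1 + b • v2 + c • v3}) ≤
    2 / 3 * arctan (D / (y1 * y2 * y3 + y1 * r + y2 * q + y3 * p)) := by
  have e21 : inner ℝ v2 v1 = p := by rw [real_inner_comm]; exact e12
  have e31 : inner ℝ v3 v1 = q := by rw [real_inner_comm]; exact e13
  have e32 : inner ℝ v3 v2 = r := by rw [real_inner_comm]; exact e23
  have hdet : 0 < gramDet (y1 ^ 2) (y2 ^ 2) (y3 ^ 2) p q r := by rw [← hDd]; positivity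
  obtain ⟨d, hd⟩ : ∃ d, d = gramDet (y1 ^ 2) (y2 ^ 2) (y3 ^ 2) p q r := ⟨_, rfl⟩
  have hd' := hd
  rw [← hd] at hDd hdet
  unfold gramDet at hd
  set z1 : ℂ := ⟨y1 ^ 2 * r - p * q, y1 * D⟩ with hz1
  set z2 : ℂ := ⟨y2 ^ 2 * q - p * r, y2 * D⟩ with hz2
  set z3 : ℂ := ⟨y3 ^ 2 * p - q * r, y3 * D⟩ with hz3
  have P := gram_product_identity y1 y2 y3 p q r D (hDd.trans hd')
  have S := arg_sum_eq z1 z2 z3 _ _ (by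
    have := sub_pos.2 hp
    have := sub_pos.2 hq
    have := sub_pos.2 hr
    positivity) (by simp only [hz1]; positivity) (by simp only [hz2]; positivity)
    (by simp only [hz3]; positivity) hA hD P
  simp only at S
  obtain ⟨n1, hn1⟩ : ∃ n : E3, n = (y2 ^ 2 * y3 ^ 2 - r ^ 2) • v1 - (y3 ^ 2 * p - q * r) • v2
    - (y2 ^ 2 * q - p * r) • v3 := ⟨_, rfl⟩
  obtain ⟨n2, hn2⟩ : ∃ n : E3, n = (y1 ^ 2 * y3 ^ 2 - q ^ 2) • v2 - (y3 ^ 2 * p - q * r) • v1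
    - (y1 ^ 2 * r - p * q) • v3 := ⟨_, rfl⟩
  obtain ⟨n3, hn3⟩ : ∃ n : E3, n = (y1 ^ 2 * y2 ^ 2 - p ^ 2) • v3 - (y2 ^ 2 * q - p * r) • v1
    - (y1 ^ 2 * r - p * q) • v2 := ⟨_, rfl⟩
  have n1v1 : inner ℝ n1 v1 = d := by
    rw [hn1]; simp only [inner_sub_left, real_inner_smul_left, e11, e21, e31]; rw [hd]; ring
  have n1v2 : inner ℝ n1 v2 = 0 := by
    rw [hn1]; simp only [inner_sub_left, real_inner_smul_left, e12, e22, e32]; ring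
  have n1v3 : inner ℝ n1 v3 = 0 := by
    rw [hn1]; simp only [inner_sub_left, real_inner_smul_left, e13, e23, e33]; ring
  have n2v1 : inner ℝ n2 v1 = 0 := by
    rw [hn2]; simp only [inner_sub_left, real_inner_smul_left, e11, e21, e31]; ring
  have n2v2 : inner ℝ n2 v2 = d := by
    rw [hn2]; simp only [inner_sub_left, real_inner_smul_left, e12, e22, e32]; rw [hd]; ring
  have n2v3 : inner ℝ n2 v3 = 0 := by
    rw [hn2]; simp only [inner_sub_left, real_inner_smul_left, e13, e23, e33]; ring
  have n3v1 : inner ℝ n3 v1 = 0 := by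
    rw [hn3]; simp only [inner_sub_left, real_inner_smul_left, e11, e21, e31]; ring
  have n3v2 : inner ℝ n3 v2 = 0 := by
    rw [hn3]; simp only [inner_sub_left, real_inner_smul_left, e12, e22, e32]; ring
  have n3v3 : inner ℝ n3 v3 = d := by
    rw [hn3]; simp only [inner_sub_left, real_inner_smul_left, e13, e23, e33]; rw [hd]; ring
  have n1n2 : inner ℝ n1 n2 = -(d * z3.re) := by
    rw [hn2]; simp only [inner_sub_right, real_inner_smul_right, n1v1, n1v2, n1v3, hz3]; ring
  have n1n3 : inner ℝ n1 n3 = -(d * z2.re) := by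
    rw [hn3]; simp only [inner_sub_right, real_inner_smul_right, n1v1, n1v2, n1v3, hz2]; ring
  have n2n3 : inner ℝ n2 n3 = -(d * z1.re) := by
    rw [hn3]; simp only [inner_sub_right, real_inner_smul_right, n2v1, n2v2, n2v3, hz1]; ring
  have n11 : ‖n1‖ ^ 2 = d * (y2 ^ 2 * y3 ^ 2 - r ^ 2) := by
    rw [← real_inner_self_eq_norm_sq]
    nth_rewrite 2 [hn1]
    simp only [inner_sub_right, real_inner_smul_right, n1v1, n1v2, n1v3]; ring
  have n22 : ‖n2‖ ^ 2 = d * (y1 ^ 2 * y3 ^ 2 - q ^ 2) := by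
    rw [← real_inner_self_eq_norm_sq]
    nth_rewrite 2 [hn2]
    simp only [inner_sub_right, real_inner_smul_right, n2v1, n2v2, n2v3]; ring
  have n33 : ‖n3‖ ^ 2 = d * (y1 ^ 2 * y2 ^ 2 - p ^ 2) := by
    rw [← real_inner_self_eq_norm_sq]
    nth_rewrite 2 [hn3]
    simp only [inner_sub_right, real_inner_smul_right, n3v1, n3v2, n3v3]; ring
  obtain ⟨a12, b12⟩ := angle_arg n1 n2 z3 d hdet n1n2 (by
    rw [n11, n22]; simp only [hz3]
    rw [mul_pow y3 D, hDd, hd]; ring) (by simp only [hz3]; positivity)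
  obtain ⟨a13, b13⟩ := angle_arg n1 n3 z2 d hdet n1n3 (by
    rw [n11, n33]; simp only [hz2]
    rw [mul_pow y2 D, hDd, hd]; ring) (by simp only [hz2]; positivity)
  obtain ⟨a23, b23⟩ := angle_arg n2 n3 z1 d hdet n2n3 (by
    rw [n22, n33]; simp only [hz1]
    rw [mul_pow y1 D, hDd, hd]; ring) (by simp only [hz1]; positivity)
  have ne : ∀ n v : E3, inner ℝ n v = d → n ≠ 0 := by
    intro n v h h0
    rw [h0, inner_zero_left] at h
    exact hdet.ne h
  have T := trihedral_le n1 n2 n3 (ne n1 v1 n1v1) (ne n2 v2 n2v2) (ne n3 v3 n3v3) b12 b13 b23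
  rw [a12, a13, a23] at T
  refine (measureReal_mono ?_ ?_).trans (T.trans (by linarith))
  · rintro x ⟨hx, a, b, c, ha, hb, hc, rfl⟩
    refine ⟨⟨⟨hx, ?_⟩, ?_⟩, ?_⟩
    · simp only [Set.mem_ofPred_eq, inner_add_right, real_inner_smul_right, n1v1, n1v2, n1v3]
      simp only [mul_zero, add_zero, zero_add]; positivity
    · simp only [Set.mem_ofPred_eq, inner_add_right, real_inner_smul_right, n2v1, n2v2, n2v3]
      simp only [mul_zero, add_zero, zero_add]; positivity
    · simp only [Set.mem_ofPred_eq, inner_add_right, real_inner_smul_right, n3v1, n3v2, n3v3]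
      simp only [mul_zero, add_zero, zero_add]; positivity
  · refine ne_top_of_le_ne_top (measure_closedBall_lt_top (x := (0 : E3)) (r := 1)).ne
      (measure_mono ?_)
    exact fun x hx => hx.1.1.1
/-- The open standard simplex in coordinate space. -/
def openStd : Set (Fin 3 → ℝ) := {t | 0 < t 0 ∧ 0 < t 1 ∧ 0 < t 2 ∧ t 0 + t 1 + t 2 < 1}

lemma volume_openStd : ENNReal.ofReal (1 / 6) ≤ volume openStd := by
  have h8 : volume {x : Fin 3 → ℝ | ∑ i, |x i| ^ (1 : ℝ) < 1} = ENNReal.ofReal (8 / 6) := by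
    rw [volume_sum_rpow_lt_one (Fin 3) le_rfl]
    congr 1
    rw [show (1 : ℝ) / 1 + 1 = (1 : ℕ) + 1 by norm_num, Gamma_nat_eq_factorial]
    simp only [Fintype.card_fin]
    rw [show ((3 : ℕ) : ℝ) / 1 + 1 = (3 : ℕ) + 1 by norm_num, Gamma_nat_eq_factorial]
    norm_num [Nat.factorial]
  set f : (Fin 3 → ℤˣ) → (Fin 3 → ℝ) →ₗ[ℝ] (Fin 3 → ℝ) := fun ε =>
    Matrix.toLin' (Matrix.diagonal fun i => ((ε i : ℤ) : ℝ)) with hf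
  have happ : ∀ ε x i, f ε x i = ((ε i : ℤ) : ℝ) * x i := by
    intro ε x i
    simp [hf, Matrix.toLin'_apply, Matrix.mulVec_diagonal]
  have hvol : ∀ ε, volume (f ε '' openStd) = volume openStd := by
    intro ε
    rw [Measure.addHaar_image_linearMap]
    have : |LinearMap.det (f ε)| = 1 := by
      simp only [hf, LinearMap.det_toLin', Matrix.det_diagonal, Finset.abs_prod]
      refine Finset.prod_eq_one fun i _ => ?_
      rcases Int.units_eq_one_or (ε i) with h | h <;> simp [h]
    rw [this]; simp
  have hsub : {x : Fin 3 → ℝ | ∑ i, |x i| ^ (1 : ℝ) < 1} ⊆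
      (⋃ ε, f ε '' openStd) ∪ ⋃ i : Fin 3, {x : Fin 3 → ℝ | x i = 0} := by
    intro x hx
    by_cases h0 : ∃ i, x i = 0
    · right; simpa using h0
    · left
      push Not at h0
      simp only [Set.mem_ofPred_eq, rpow_one, Fin.sum_univ_three] at hx
      refine Set.mem_iUnion.2 ⟨fun i => if 0 < x i then 1 else -1, fun i => |x i|, ?_, ?_⟩
      · exact ⟨abs_pos.2 (h0 0), abs_pos.2 (h0 1), abs_pos.2 (h0 2), hx⟩
      · ext i
        rw [happ]
        by_cases hi : 0 < x i
        · simp [hi, abs_of_pos hi]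
        · simp [hi, abs_of_nonpos (not_lt.1 hi)]
  have h1 := measure_mono (μ := volume) hsub
  rw [h8] at h1
  have h2 : volume (⋃ i : Fin 3, {x : Fin 3 → ℝ | x i = 0}) = 0 := by
    rw [measure_iUnion_null_iff]
    intro i
    exact Measure.pi_hyperplane _ i 0
  have h3 : volume (⋃ ε, f ε '' openStd) ≤ 8 * volume openStd := by
    refine (measure_iUnion_fintype_le _ _).trans ?_
    simp only [hvol, Finset.sum_const, Finset.card_univ]
    rw [nsmul_eq_mul]
    simp
  have h4 : ENNReal.ofReal (8 / 6) ≤ 8 * volume openStd := by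
    refine h1.trans ((measure_union_le _ _).trans ?_)
    rw [h2, add_zero]; exact h3
  have h5 : ENNReal.ofReal (8 / 6) = 8 * ENNReal.ofReal (1 / 6) := by
    rw [show (8 : ENNReal) = ENNReal.ofReal 8 by simp, ← ENNReal.ofReal_mul (by norm_num)]
    norm_num
  rw [h5] at h4
  exact (ENNReal.mul_le_mul_iff_right (by norm_num) (by norm_num)).1 h4

/-- Volume of an open simplex with a vertex at the origin. -/
lemma volume_simplex (M : Matrix (Fin 3) (Fin 3) ℝ) :
    ENNReal.ofReal (|M.det| / 6) ≤ volume (Matrix.toLin' M '' openStd) := by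
  rw [Measure.addHaar_image_linearMap, LinearMap.det_toLin', div_eq_mul_one_div,
    ENNReal.ofReal_mul (abs_nonneg _)]
  gcongr
  exact volume_openStd

lemma volume_piece (K : Set (Fin 3 → ℝ)) (hK : Convex ℝ K) (i j k : Fin 3) (hij : i ≠ j)
    (hik : i ≠ k) (hjk : j ≠ k) (l c m : Fin 3 → ℝ) (h0 : (0 : Fin 3 → ℝ) ∈ K) (hl : l ∈ K)
    (hc : c ∈ K) (hm : m ∈ K) (mi : m i = 1 / 2) (mj : m j = 0) (mk : m k = 0) (ck : c k = 0)
    (ci : 0 ≤ c i) (cj : 0 ≤ c j) (lk : 0 ≤ l k) :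
    ENNReal.ofReal (c j * l k / 12) ≤ volume (K ∩ {s | l j * s k < l k * s j ∧
      l i * s k < l k * s i ∧ c i * (l k * s j - l j * s k) < c j * (l k * s i - l i * s k)}) := by
  rcases (mul_nonneg cj lk).eq_or_lt with h | h
  · rw [← h]; simp
  have cj' : 0 < c j := lt_of_le_of_ne cj (by rintro e; rw [← e] at h; simp at h)
  have lk' : 0 < l k := lt_of_le_of_ne lk (by rintro e; rw [← e] at h; simp at h)
  set M : Matrix (Fin 3) (Fin 3) ℝ := Matrix.of fun a b => ![m a, c a, l a] b with hM
  have hdet : |M.det| = c j * l k / 2 := by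
    have e : M.det = c j * l k / 2 ∨ M.det = - (c j * l k / 2) := by
      rw [hM, Matrix.det_fin_three]
      simp only [Matrix.of_apply, Matrix.cons_val]
      fin_cases i <;> fin_cases j <;> fin_cases k <;> simp_all <;>
        first | (left; ring1) | (right; ring1)
    rcases e with e | e
    · rw [e, abs_of_pos (by positivity)]
    · rw [e, abs_neg, abs_of_pos (by positivity)]
  have hv := volume_simplex M
  rw [hdet, div_div] at hv
  rw [show (2 : ℝ) * 6 = 12 by norm_num] at hv
  refine hv.trans (measure_mono ?_)
  rintro s ⟨t, ⟨t0, t1, t2, ht⟩, rfl⟩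
  have happ : ∀ a, Matrix.toLin' M t a = t 0 * m a + t 1 * c a + t 2 * l a := by
    intro a
    rw [Matrix.toLin'_apply, Matrix.mulVec, dotProduct, Fin.sum_univ_three]
    simp [hM]; ring
  refine ⟨?_, ?_, ?_, ?_⟩
  · have := hK.sum_mem (t := (Finset.univ : Finset (Fin 4)))
      (w := ![t 0, t 1, t 2, 1 - (t 0 + t 1 + t 2)]) (z := ![m, c, l, 0]) (by
        intro a _; fin_cases a <;> simp <;> linarith) (by simp [Fin.sum_univ_four]) (by
        intro a _; fin_cases a <;> simpa)
    convert this using 1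
    ext a
    rw [happ]; simp [Fin.sum_univ_four]
  · rw [happ, happ, mj, mk, ck]
    nlinarith [mul_pos h t1]
  · rw [happ, happ, mi, mk, ck]
    nlinarith [mul_pos lk' t0, mul_nonneg (mul_nonneg lk ci) t1.le]
  · rw [happ, happ, happ, mi, mj, mk, ck]
    nlinarith [mul_pos h t0]

lemma measure_two_le {α : Type*} [MeasurableSpace α] (μ : Measure α) (A B C : Set α) (x y : ENNReal)
    (hB : MeasurableSet B) (hAB : Disjoint A B) (hA : A ⊆ C) (hBC : B ⊆ C)
    (hx : x ≤ μ A) (hy : y ≤ μ B) : x + y ≤ μ C := by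
  calc x + y ≤ μ A + μ B := add_le_add hx hy
    _ = μ (A ∪ B) := (measure_union hAB hB).symm
    _ ≤ μ C := measure_mono (Set.union_subset hA hBC)

/-- The part of the cell lying over the face opposite to the index `k`. -/
lemma volume_face_part (K : Set (Fin 3 → ℝ)) (hK : Convex ℝ K) (hKm : MeasurableSet K)
    (i j k : Fin 3) (hij : i ≠ j)
    (hik : i ≠ k) (hjk : j ≠ k) (l c m m' : Fin 3 → ℝ) (h0 : (0 : Fin 3 → ℝ) ∈ K) (hl : l ∈ K)
    (hc : c ∈ K) (hm : m ∈ K) (hm' : m' ∈ K) (mi : m i = 1 / 2) (mj : m j = 0) (mk : m k = 0)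
    (mi' : m' i = 0) (mj' : m' j = 1 / 2) (mk' : m' k = 0) (ck : c k = 0)
    (ci : 0 ≤ c i) (cj : 0 ≤ c j) (lk : 0 ≤ l k) :
    ENNReal.ofReal ((c i + c j) * l k / 12) ≤ volume (K ∩ {s | l j * s k < l k * s j ∧
      l i * s k < l k * s i}) := by
  have A := volume_piece K hK i j k hij hik hjk l c m h0 hl hc hm mi mj mk ck ci cj lk
  have B := volume_piece K hK j i k hij.symm hjk hik l c m' h0 hl hc hm' mj' mi' mk' ck cj ci lk
  have := measure_two_le volume _ _ (K ∩ {s | l j * s k < l k * s j ∧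
      l i * s k < l k * s i}) _ _ ?_ ?_ ?_ ?_ A B
  · rw [← ENNReal.ofReal_add (by positivity) (by positivity)] at this
    convert this using 2
    ring
  · refine hKm.inter ?_
    refine IsOpen.measurableSet ?_
    refine IsOpen.and (isOpen_lt (by fun_prop) (by fun_prop)) ?_
    exact IsOpen.and (isOpen_lt (by fun_prop) (by fun_prop))
      (isOpen_lt (by fun_prop) (by fun_prop))
  · rw [Set.disjoint_left]
    rintro s ⟨_, _, _, h⟩ ⟨_, _, _, h'⟩
    exact lt_asymm h h'
  · rintro s ⟨h, h1, h2, _⟩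
    exact ⟨h, h1, h2⟩
  · rintro s ⟨h, h1, h2, _⟩
    exact ⟨h, h2, h1⟩

lemma volume_cell_coord (K : Set (Fin 3 → ℝ)) (hK : Convex ℝ K) (hKm : MeasurableSet K)
    (l1 l2 l3 a2 a3 b1 b3 c1 c2 : ℝ) (hl1 : 0 ≤ l1) (hl2 : 0 ≤ l2) (hl3 : 0 ≤ l3)
    (ha2 : 0 ≤ a2) (ha3 : 0 ≤ a3) (hb1 : 0 ≤ b1) (hb3 : 0 ≤ b3) (hc1 : 0 ≤ c1) (hc2 : 0 ≤ c2)
    (h0 : ![0, 0, 0] ∈ K) (hl : ![l1, l2, l3] ∈ K) (h1 : ![1 / 2, 0, 0] ∈ K)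
    (h2 : ![0, 1 / 2, 0] ∈ K) (h3 : ![0, 0, 1 / 2] ∈ K) (ha : ![0, a2, a3] ∈ K)
    (hb : ![b1, 0, b3] ∈ K) (hc : ![c1, c2, 0] ∈ K) :
    ENNReal.ofReal ((l1 * (a2 + a3) + l2 * (b1 + b3) + l3 * (c1 + c2)) / 12) ≤ volume K := by
  have h0' : (0 : Fin 3 → ℝ) ∈ K := by
    convert h0 using 1
    ext i; fin_cases i <;> rfl
  have A := volume_face_part K hK hKm 1 2 0 (by decide) (by decide) (by decide) _ _ _ _ h0' hl ha
    h2 h3 (by simp) (by simp) (by simp) (by simp) (by simp) (by simp) (by simp) (by simpa)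
    (by simpa) (by simpa)
  have B := volume_face_part K hK hKm 0 2 1 (by decide) (by decide) (by decide) _ _ _ _ h0' hl hb
    h1 h3 (by simp) (by simp) (by simp) (by simp) (by simp) (by simp) (by simp) (by simpa)
    (by simpa) (by simpa)
  have C := volume_face_part K hK hKm 0 1 2 (by decide) (by decide) (by decide) _ _ _ _ h0' hl hc
    h1 h2 (by simp) (by simp) (by simp) (by simp) (by simp) (by simp) (by simp) (by simpa)
    (by simpa) (by simpa)
  simp only [Matrix.cons_val] at A B C
  have mB : MeasurableSet (K ∩ {s | l3 * s 1 < l2 * s 2 ∧ l1 * s 1 < l2 * s 0}) :=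
    hKm.inter (IsOpen.measurableSet
      (IsOpen.and (isOpen_lt (by fun_prop) (by fun_prop)) (isOpen_lt (by fun_prop) (by fun_prop))))
  have mC : MeasurableSet (K ∩ {s | l2 * s 2 < l3 * s 1 ∧ l1 * s 2 < l3 * s 0}) :=
    hKm.inter (IsOpen.measurableSet
      (IsOpen.and (isOpen_lt (by fun_prop) (by fun_prop)) (isOpen_lt (by fun_prop) (by fun_prop))))
  have AB := measure_two_le volume _ _ (K ∩ {s | l3 * s 0 < l1 * s 2 ∧ l2 * s 0 < l1 * s 1} ∪
    K ∩ {s | l3 * s 1 < l2 * s 2 ∧ l1 * s 1 < l2 * s 0}) _ _ mB ?_ Set.subset_union_left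
    Set.subset_union_right A B
  · have ABC := measure_two_le volume _ _ K _ _ mC ?_ ?_ Set.inter_subset_left AB C
    · rw [← ENNReal.ofReal_add (by positivity) (by positivity),
        ← ENNReal.ofReal_add (by positivity) (by positivity)] at ABC
      convert ABC using 2
      ring
    · rw [Set.disjoint_left]
      rintro s (⟨_, h, h'⟩ | ⟨_, h, h'⟩) ⟨_, g, g'⟩
      · linarith
      · linarith
    · exact Set.union_subset Set.inter_subset_left Set.inter_subset_left
  · rw [Set.disjoint_left]
    rintro s ⟨_, h, h'⟩ ⟨_, g, g'⟩
    linarith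

lemma face_center (x y g U : ℝ) (hU : U = x * y - g ^ 2) (hUp : 0 < U) (hx : g ≤ x)
    (hy : g ≤ y) (hg : 0 ≤ g) (hxp : 0 < x) (hyp : 0 < y) :
    0 ≤ y * (x - g) / (2 * U) ∧ 0 ≤ x * (y - g) / (2 * U) ∧
    y * (x - g) / (2 * U) + x * (y - g) / (2 * U) = faceSum x y g ∧
    faceSum x y g ≤ 1 ∧
    x * (y * (x - g) / (2 * U)) + g * (x * (y - g) / (2 * U)) = x / 2 ∧
    g * (y * (x - g) / (2 * U)) + y * (x * (y - g) / (2 * U)) = y / 2 := by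
  have h1 := sub_nonneg.2 hx
  have h2 := sub_nonneg.2 hy
  refine ⟨by positivity, by positivity, ?_, ?_, ?_, ?_⟩
  · unfold faceSum
    rw [← hU, ← add_div]
    congr 1; ring
  · unfold faceSum
    rw [← hU, div_le_one (by positivity), hU]
    nlinarith [mul_nonneg hg h1, mul_nonneg hg h2]
  · field_simp; rw [hU]; ring
  · field_simp; rw [hU]; ring

lemma third_ineq (x y z g p q U : ℝ) (hU : U = x * y - g ^ 2) (hUp : 0 < U)
    (hN : 0 ≤ cramerNum z x y p q g) :
    p * (y * (x - g) / (2 * U)) + q * (x * (y - g) / (2 * U)) ≤ z / 2 := by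
  have : z / 2 - (p * (y * (x - g) / (2 * U)) + q * (x * (y - g) / (2 * U))) =
    cramerNum z x y p q g / U := by
    unfold cramerNum
    field_simp
    rw [hU]; ring
  have h2 : 0 ≤ cramerNum z x y p q g / U := by positivity
  linarith

/-- The cell in linear coordinates. -/
def cellK (x1 x2 x3 p q r : ℝ) : Set (Fin 3 → ℝ) :=
  {s | 0 ≤ s 0 ∧ 0 ≤ s 1 ∧ 0 ≤ s 2 ∧ s 0 + s 1 + s 2 ≤ 1 ∧ x1 * s 0 + p * s 1 + q * s 2 ≤ x1 / 2 ∧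
    p * s 0 + x2 * s 1 + r * s 2 ≤ x2 / 2 ∧ q * s 0 + r * s 1 + x3 * s 2 ≤ x3 / 2}

lemma convex_cellK (x1 x2 x3 p q r : ℝ) : Convex ℝ (cellK x1 x2 x3 p q r) := by
  rintro s ⟨s1, s2, s3, s4, s5, s6, s7⟩ t ⟨t1, t2, t3, t4, t5, t6, t7⟩ a b ha hb hab
  obtain rfl : b = 1 - a := by linarith
  refine ⟨?_, ?_, ?_, ?_, ?_, ?_, ?_⟩ <;>
    simp only [Pi.add_apply, Pi.smul_apply, smul_eq_mul]
  · positivity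
  · positivity
  · positivity
  · nlinarith [mul_le_mul_of_nonneg_left s4 ha, mul_le_mul_of_nonneg_left t4 hb]
  · nlinarith [mul_le_mul_of_nonneg_left s5 ha, mul_le_mul_of_nonneg_left t5 hb]
  · nlinarith [mul_le_mul_of_nonneg_left s6 ha, mul_le_mul_of_nonneg_left t6 hb]
  · nlinarith [mul_le_mul_of_nonneg_left s7 ha, mul_le_mul_of_nonneg_left t7 hb]

lemma measurableSet_cellK (x1 x2 x3 p q r : ℝ) : MeasurableSet (cellK x1 x2 x3 p q r) := by
  refine IsClosed.measurableSet ?_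
  unfold cellK
  refine IsClosed.and (isClosed_le (by fun_prop) (by fun_prop)) ?_
  refine IsClosed.and (isClosed_le (by fun_prop) (by fun_prop)) ?_
  refine IsClosed.and (isClosed_le (by fun_prop) (by fun_prop)) ?_
  refine IsClosed.and (isClosed_le (by fun_prop) (by fun_prop)) ?_
  refine IsClosed.and (isClosed_le (by fun_prop) (by fun_prop)) ?_
  exact IsClosed.and (isClosed_le (by fun_prop) (by fun_prop))
    (isClosed_le (by fun_prop) (by fun_prop))

lemma volume_cellK (x1 x2 x3 p q r l1 l2 l3 : ℝ) (hx1 : 0 < x1) (hx2 : 0 < x2) (hx3 : 0 < x3)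
    (hp : 0 ≤ p) (hq : 0 ≤ q) (hr : 0 ≤ r) (p1 : p ≤ x1) (p2 : p ≤ x2) (q1 : q ≤ x1) (q3 : q ≤ x3)
    (r2 : r ≤ x2) (r3 : r ≤ x3) (hU1 : 0 < x2 * x3 - r ^ 2) (hU2 : 0 < x1 * x3 - q ^ 2)
    (hU3 : 0 < x1 * x2 - p ^ 2)
    (hN1 : 0 ≤ cramerNum x1 x2 x3 p q r) (hN2 : 0 ≤ cramerNum x2 x1 x3 p r q)
    (hN3 : 0 ≤ cramerNum x3 x1 x2 q r p) (hl1 : 0 ≤ l1) (hl2 : 0 ≤ l2) (hl3 : 0 ≤ l3)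
    (hl : l1 + l2 + l3 ≤ 1) (g1 : x1 * l1 + p * l2 + q * l3 = x1 / 2)
    (g2 : p * l1 + x2 * l2 + r * l3 = x2 / 2) (g3 : q * l1 + r * l2 + x3 * l3 = x3 / 2) :
    ENNReal.ofReal ((l1 * faceSum x2 x3 r + l2 * faceSum x1 x3 q + l3 * faceSum x1 x2 p) / 12) ≤
      volume (cellK x1 x2 x3 p q r) := by
  obtain ⟨a2, a3, a4, a5, a6, a7⟩ := face_center x2 x3 r _ rfl hU1 r2 r3 hr hx2 hx3
  obtain ⟨b2, b3, b4, b5, b6, b7⟩ := face_center x1 x3 q _ rfl hU2 q1 q3 hq hx1 hx3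
  obtain ⟨c2, c3, c4, c5, c6, c7⟩ := face_center x1 x2 p _ rfl hU3 p1 p2 hp hx1 hx2
  have A := third_ineq _ _ _ _ _ _ _ rfl hU1 hN1
  have B := third_ineq _ _ _ _ _ _ _ rfl hU2 hN2
  have C := third_ineq _ _ _ _ _ _ _ rfl hU3 hN3
  rw [← a4, ← b4, ← c4]
  rw [← a4] at a5
  rw [← b4] at b5
  rw [← c4] at c5
  refine volume_cell_coord _ (convex_cellK _ _ _ _ _ _) (measurableSet_cellK _ _ _ _ _ _)
    l1 l2 l3 _ _ _ _ _ _ hl1 hl2 hl3 a2 a3 b2 b3 c2 c3 ?_ ?_ ?_ ?_ ?_ ?_ ?_ ?_ <;>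
  refine ⟨?_, ?_, ?_, ?_, ?_, ?_, ?_⟩ <;> simp only [Matrix.cons_val] <;> linarith

lemma volume_cell_E3 (p₀ p₁ p₂ p₃ : E3) (x1 x2 x3 p q r D W : ℝ)
    (e11 : inner ℝ (p₁ - p₀) (p₁ - p₀) = x1) (e22 : inner ℝ (p₂ - p₀) (p₂ - p₀) = x2)
    (e33 : inner ℝ (p₃ - p₀) (p₃ - p₀) = x3) (e12 : inner ℝ (p₁ - p₀) (p₂ - p₀) = p)
    (e13 : inner ℝ (p₁ - p₀) (p₃ - p₀) = q) (e23 : inner ℝ (p₂ - p₀) (p₃ - p₀) = r)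
    (hD : 0 < D) (hDd : D ^ 2 = gramDet x1 x2 x3 p q r)
    (hK : ENNReal.ofReal W ≤ volume (cellK x1 x2 x3 p q r)) :
    D * W ≤ volume.real {x ∈ convexHull ℝ ({p₀, p₁, p₂, p₃} : Set E3) |
        dist x p₀ ≤ dist x p₁ ∧ dist x p₀ ≤ dist x p₂ ∧ dist x p₀ ≤ dist x p₃} := by
  set Q := {x ∈ convexHull ℝ ({p₀, p₁, p₂, p₃} : Set E3) |
        dist x p₀ ≤ dist x p₁ ∧ dist x p₀ ≤ dist x p₂ ∧ dist x p₀ ≤ dist x p₃} with hQ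
  have hfin : volume Q ≠ ⊤ := by
    refine ne_top_of_le_ne_top ?_ (measure_mono (fun x (hx : x ∈ Q) => hx.1))
    have hb : Bornology.IsBounded (convexHull ℝ ({p₀, p₁, p₂, p₃} : Set E3)) := by
      rw [isBounded_convexHull]
      exact (Set.toFinite _).isBounded
    exact hb.measure_lt_top.ne
  set M : Matrix (Fin 3) (Fin 3) ℝ :=
    Matrix.of fun a b => ![(p₁ - p₀) a, (p₂ - p₀) a, (p₃ - p₀) a] b with hM
  have hin : ∀ u v : E3, inner ℝ u v = u 0 * v 0 + u 1 * v 1 + u 2 * v 2 := by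
    intro u v
    rw [PiLp.inner_apply, Fin.sum_univ_three]
    simp; ring
  have hdet : |M.det| = D := by
    rw [← abs_of_pos hD]
    rw [← sq_eq_sq_iff_abs_eq_abs, hDd, hM, Matrix.det_fin_three]
    simp only [Matrix.of_apply, Matrix.cons_val]
    rw [hin] at e11 e22 e33 e12 e13 e23
    rw [← e11, ← e22, ← e33, ← e12, ← e13, ← e23]
    unfold gramDet
    ring
  have happ : ∀ s, WithLp.toLp 2 (Matrix.toLin' M s) =
      s 0 • (p₁ - p₀) + s 1 • (p₂ - p₀) + s 2 • (p₃ - p₀) := by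
    intro s
    ext a
    simp only [Matrix.toLin'_apply, Matrix.mulVec, dotProduct, Fin.sum_univ_three, hM,
      Matrix.of_apply, Matrix.cons_val, PiLp.add_apply, PiLp.smul_apply, smul_eq_mul]
    ring
  have hsub : Matrix.toLin' M '' cellK x1 x2 x3 p q r ⊆
      (WithLp.toLp 2 : (Fin 3 → ℝ) → E3) ⁻¹' ((fun x => p₀ + x) ⁻¹' Q) := by
    rintro _ ⟨s, ⟨s1, s2, s3, s4, s5, s6, s7⟩, rfl⟩
    simp only [Set.mem_preimage, happ]
    have hd : ∀ w v : E3, inner ℝ w (v - p₀) ≤ inner ℝ (v - p₀) (v - p₀) / 2 →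
        dist (p₀ + w) p₀ ≤ dist (p₀ + w) v := by
      intro w v h
      rw [dist_eq_norm, dist_eq_norm, ← sq_le_sq₀ (norm_nonneg _) (norm_nonneg _)]
      rw [show p₀ + w - v = w - (v - p₀) by abel, add_sub_cancel_left, norm_sub_sq_real,
        ← real_inner_self_eq_norm_sq (v - p₀)]
      linarith
    have e21 : inner ℝ (p₂ - p₀) (p₁ - p₀) = p := by rw [real_inner_comm]; exact e12
    have e31 : inner ℝ (p₃ - p₀) (p₁ - p₀) = q := by rw [real_inner_comm]; exact e13
    have e32 : inner ℝ (p₃ - p₀) (p₂ - p₀) = r := by rw [real_inner_comm]; exact e23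
    refine ⟨?_, hd _ _ ?_, hd _ _ ?_, hd _ _ ?_⟩
    · have := (convex_convexHull ℝ ({p₀, p₁, p₂, p₃} : Set E3)).sum_mem
        (t := (Finset.univ : Finset (Fin 4)))
        (w := ![s 0, s 1, s 2, 1 - (s 0 + s 1 + s 2)]) (z := ![p₁, p₂, p₃, p₀]) (by
          intro a _; fin_cases a <;> simp <;> linarith) (by simp [Fin.sum_univ_four]) (by
          intro a _; apply subset_convexHull; fin_cases a <;> simp)
      convert this using 1
      simp [Fin.sum_univ_four]
      module
    · simp only [inner_add_left, real_inner_smul_left, e11, e21, e31]; linarith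
    · simp only [inner_add_left, real_inner_smul_left, e12, e22, e32]; linarith
    · simp only [inner_add_left, real_inner_smul_left, e13, e23, e33]; linarith
  have h1 : ENNReal.ofReal (D * W) ≤ volume Q := by
    calc ENNReal.ofReal (D * W) = ENNReal.ofReal D * ENNReal.ofReal W := ENNReal.ofReal_mul hD.le
      _ ≤ ENNReal.ofReal D * volume (cellK x1 x2 x3 p q r) := by gcongr
      _ = volume (Matrix.toLin' M '' cellK x1 x2 x3 p q r) := by
        rw [Measure.addHaar_image_linearMap, LinearMap.det_toLin', hdet]
      _ ≤ volume ((WithLp.toLp 2 : (Fin 3 → ℝ) → E3) ⁻¹' ((fun x => p₀ + x) ⁻¹' Q)) :=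
        measure_mono hsub
      _ = volume ((fun x => p₀ + x) ⁻¹' Q) :=
        (EuclideanSpace.volume_preserving_symm_measurableEquiv_toLp (Fin 3)).symm.measure_preimage_equiv _
      _ = volume Q := measure_preimage_add _ _ _
  exact (ENNReal.ofReal_le_iff_le_toReal hfin).1 h1

lemma hull_coords (p₀ p₁ p₂ p₃ x : E3) (hx : x ∈ convexHull ℝ ({p₀, p₁, p₂, p₃} : Set E3)) :
    ∃ l1 l2 l3 : ℝ, 0 ≤ l1 ∧ 0 ≤ l2 ∧ 0 ≤ l3 ∧ l1 + l2 + l3 ≤ 1 ∧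
      x - p₀ = l1 • (p₁ - p₀) + l2 • (p₂ - p₀) + l3 • (p₃ - p₀) := by
  have hsub : convexHull ℝ ({p₀, p₁, p₂, p₃} : Set E3) ⊆
      {x | ∃ l1 l2 l3 : ℝ, 0 ≤ l1 ∧ 0 ≤ l2 ∧ 0 ≤ l3 ∧ l1 + l2 + l3 ≤ 1 ∧
      x - p₀ = l1 • (p₁ - p₀) + l2 • (p₂ - p₀) + l3 • (p₃ - p₀)} := by
    refine convexHull_min ?_ ?_
    · intro y hy
      simp only [Set.mem_insert_iff, Set.mem_singleton_iff] at hy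
      rcases hy with rfl | rfl | rfl | rfl
      · exact ⟨0, 0, 0, le_rfl, le_rfl, le_rfl, by norm_num, by simp⟩
      · exact ⟨1, 0, 0, by norm_num, le_rfl, le_rfl, by norm_num, by simp⟩
      · exact ⟨0, 1, 0, le_rfl, by norm_num, le_rfl, by norm_num, by simp⟩
      · exact ⟨0, 0, 1, le_rfl, le_rfl, by norm_num, by norm_num, by simp⟩
    · rintro y ⟨l1, l2, l3, h1, h2, h3, h4, h5⟩ z ⟨m1, m2, m3, k1, k2, k3, k4, k5⟩ a b ha hb hab
      refine ⟨a * l1 + b * m1, a * l2 + b * m2, a * l3 + b * m3, by positivity, by positivity,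
        by positivity, by nlinarith [mul_le_mul_of_nonneg_left h4 ha,
          mul_le_mul_of_nonneg_left k4 hb], ?_⟩
      have e : a • y + b • z - p₀ = a • (y - p₀) + b • (z - p₀) := by
        obtain rfl : b = 1 - a := by linarith
        module
      rw [e, h5, k5]
      module
  exact hsub hx

lemma gram_pos (p₀ p₁ p₂ p₃ : E3) (hindep : AffineIndependent ℝ ![p₀, p₁, p₂, p₃])
    (x1 x2 x3 p q r : ℝ)
    (e11 : inner ℝ (p₁ - p₀) (p₁ - p₀) = x1) (e22 : inner ℝ (p₂ - p₀) (p₂ - p₀) = x2)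
    (e33 : inner ℝ (p₃ - p₀) (p₃ - p₀) = x3) (e12 : inner ℝ (p₁ - p₀) (p₂ - p₀) = p)
    (e13 : inner ℝ (p₁ - p₀) (p₃ - p₀) = q) (e23 : inner ℝ (p₂ - p₀) (p₃ - p₀) = r) :
    0 < gramDet x1 x2 x3 p q r := by
  set M : Matrix (Fin 3) (Fin 3) ℝ :=
    Matrix.of fun a b => ![(p₁ - p₀) a, (p₂ - p₀) a, (p₃ - p₀) a] b with hM
  have hin : ∀ u v : E3, inner ℝ u v = u 0 * v 0 + u 1 * v 1 + u 2 * v 2 := by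
    intro u v
    rw [PiLp.inner_apply, Fin.sum_univ_three]
    simp; ring
  have hdet : gramDet x1 x2 x3 p q r = M.det ^ 2 := by
    rw [hM, Matrix.det_fin_three]
    simp only [Matrix.of_apply, Matrix.cons_val]
    rw [hin] at e11 e22 e33 e12 e13 e23
    rw [← e11, ← e22, ← e33, ← e12, ← e13, ← e23]
    unfold gramDet
    ring
  have hne : M.det ≠ 0 := by
    intro h0
    obtain ⟨s, hs, hs0⟩ := Matrix.exists_mulVec_eq_zero_iff.2 h0
    apply hs
    have hcomb : s 0 • (p₁ - p₀) + s 1 • (p₂ - p₀) + s 2 • (p₃ - p₀) = 0 := by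
      ext a
      have := congrFun hs0 a
      simp only [Matrix.mulVec, dotProduct, Fin.sum_univ_three, hM,
        Matrix.of_apply, Matrix.cons_val, Pi.zero_apply] at this
      simp only [PiLp.add_apply, PiLp.smul_apply, smul_eq_mul, PiLp.zero_apply]
      linarith
    have key := affineIndependent_iff.1 hindep Finset.univ
      ![-(s 0 + s 1 + s 2), s 0, s 1, s 2] (by simp [Fin.sum_univ_four]; ring) (by
        simp only [Fin.sum_univ_four, Matrix.cons_val]
        rw [← hcomb]; module)
    have k1 := key 1 (Finset.mem_univ _)
    have k2 := key 2 (Finset.mem_univ _)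
    have k3 := key 3 (Finset.mem_univ _)
    simp only [Matrix.cons_val] at k1 k2 k3
    ext i
    fin_cases i
    · exact k1
    · exact k2
    · exact k3
  rw [hdet]
  positivity

lemma cone_volume_le (p₀ p₁ p₂ p₃ : E3) :
    volume.real (Metric.closedBall p₀ 1 ∩
        {y : E3 | ∃ x ∈ convexHull ℝ ({p₀, p₁, p₂, p₃} : Set E3), ∃ t : ℝ, 0 ≤ t ∧
          y = p₀ + t • (x - p₀)}) ≤
    volume.real (Metric.closedBall (0 : E3) 1 ∩
      {x | ∃ a b c : ℝ, 0 ≤ a ∧ 0 ≤ b ∧ 0 ≤ c ∧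
        x = a • (p₁ - p₀) + b • (p₂ - p₀) + c • (p₃ - p₀)}) := by
  set C := Metric.closedBall p₀ 1 ∩
        {y : E3 | ∃ x ∈ convexHull ℝ ({p₀, p₁, p₂, p₃} : Set E3), ∃ t : ℝ, 0 ≤ t ∧
          y = p₀ + t • (x - p₀)} with hC
  have h1 : volume.real C = volume.real ((fun x => p₀ + x) ⁻¹' C) := by
    rw [measureReal_def, measureReal_def, measure_preimage_add]
  rw [h1]
  refine measureReal_mono ?_ ?_
  · rintro y ⟨hy, x, hx, t, ht, e⟩
    refine ⟨by simpa using hy, ?_⟩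
    obtain ⟨l1, l2, l3, k1, k2, k3, _, e2⟩ := hull_coords _ _ _ _ _ hx
    refine ⟨t * l1, t * l2, t * l3, by positivity, by positivity, by positivity, ?_⟩
    have : y = t • (x - p₀) := add_left_cancel e
    rw [this, e2]
    module
  · exact ne_top_of_le_ne_top (measure_closedBall_lt_top (x := (0 : E3)) (r := 1)).ne
      (measure_mono Set.inter_subset_left)

lemma cramer_solve (x1 x2 x3 p q r l1 l2 l3 : ℝ)
    (g1 : x1 * l1 + p * l2 + q * l3 = x1 / 2)
    (g2 : p * l1 + x2 * l2 + r * l3 = x2 / 2) (g3 : q * l1 + r * l2 + x3 * l3 = x3 / 2) :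
    cramerNum x1 x2 x3 p q r = gramDet x1 x2 x3 p q r * l1 ∧
    cramerNum x2 x1 x3 p r q = gramDet x1 x2 x3 p q r * l2 ∧
    cramerNum x3 x1 x2 q r p = gramDet x1 x2 x3 p q r * l3 := by
  unfold cramerNum gramDet
  refine ⟨?_, ?_, ?_⟩
  · linear_combination -(x2 * x3 - r ^ 2) * g1 + (p * x3 - q * r) * g2 + (q * x2 - p * r) * g3
  · linear_combination (p * x3 - q * r) * g1 - (x1 * x3 - q ^ 2) * g2 + (r * x1 - p * q) * g3
  · linear_combination (q * x2 - p * r) * g1 + (r * x1 - p * q) * g2 - (x1 * x2 - p ^ 2) * g3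

lemma lt_of_gram (g y z : ℝ) (hy : 0 < y) (hz : 0 < z) (h : 0 < y ^ 2 * z ^ 2 - g ^ 2) :
    g < y * z := by
  have := abs_lt_of_sq_lt_sq (a := g) (b := y * z) (by rw [mul_pow]; linarith) (by positivity)
  exact (abs_lt.1 this).2

lemma gram_two_pos (x y g : ℝ) (h : 0 < g) (hx : g < x) (hy : g ≤ y) : 0 < x * y - g ^ 2 := by
  nlinarith [mul_pos h (sub_pos.2 hx), mul_nonneg h.le (sub_nonneg.2 hy),
      mul_nonneg (sub_pos.2 hx).le (sub_nonneg.2 hy)]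

set_option maxHeartbeats 1000000 in
/-- The main inequality, in terms of squared edge lengths. -/
lemma vor_neg_aux (p₀ p₁ p₂ p₃ : E3) (hindep : AffineIndependent ℝ ![p₀, p₁, p₂, p₃])
    (hcc : ContainsCircumcenter p₀ p₁ p₂ p₃) (a b c d e f : ℝ)
    (h1 : dist p₀ p₁ ^ 2 = 8 - a) (h2 : dist p₀ p₂ ^ 2 = 4 + b) (h3 : dist p₀ p₃ ^ 2 = 4 + c)
    (h4 : dist p₂ p₃ ^ 2 = 4 + d) (h5 : dist p₁ p₃ ^ 2 = 4 + e) (h6 : dist p₁ p₂ ^ 2 = 4 + f)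
    (ha : 0 ≤ a) (hb : 0 ≤ b) (hc : 0 ≤ c)
    (hd : 0 ≤ d) (he : 0 ≤ e) (hf : 0 ≤ f) (ha' : a ≤ 1.7) (hb' : b ≤ 2.301) (hc' : c ≤ 2.301)
    (hd' : d ≤ 2.301) (he' : e ≤ 2.301) (hf' : f ≤ 2.301)
    (hcase : 0.2436 ≤ b ∨ 0.2436 ≤ d ∨ 0.3264 ≤ e) : vor p₀ p₁ p₂ p₃ < 0 := by
  have self : ∀ v : E3, inner ℝ (v - p₀) (v - p₀) = dist p₀ v ^ 2 := by
    intro v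
    rw [real_inner_self_eq_norm_sq, dist_comm, dist_eq_norm]
  have cross : ∀ u v : E3, inner ℝ (u - p₀) (v - p₀) =
      (dist p₀ u ^ 2 + dist p₀ v ^ 2 - dist u v ^ 2) / 2 := by
    intro u v
    have : u - v = (u - p₀) - (v - p₀) := by abel
    rw [dist_eq_norm u v, this, norm_sub_sq_real, ← self, ← self, real_inner_self_eq_norm_sq,
      real_inner_self_eq_norm_sq]
    ring
  have e11 := self p₁
  have e22 := self p₂
  have e33 := self p₃
  have e12 := cross p₁ p₂
  have e13 := cross p₁ p₃
  have e23 := cross p₂ p₃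
  rw [h1, h2, h6, show (8 - a + (4 + b) - (4 + f)) / 2 = (8 - a + b - f) / 2 by ring] at e12
  rw [h1, h3, h5, show (8 - a + (4 + c) - (4 + e)) / 2 = (8 - a + c - e) / 2 by ring] at e13
  rw [h2, h3, h4, show (4 + b + (4 + c) - (4 + d)) / 2 = (4 + b + c - d) / 2 by ring] at e23
  have pos : ∀ v : E3, ∀ x : ℝ, 0 < x → dist p₀ v ^ 2 = x → 0 < dist p₀ v := by
    intro v x hx h
    refine lt_of_le_of_ne dist_nonneg fun h0 => ?_
    rw [← h0] at h; norm_num at h; linarith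
  have hy1 := pos p₁ _ (by linarith) h1
  have hy2 := pos p₂ _ (by linarith) h2
  have hy3 := pos p₃ _ (by linarith) h3
  generalize dist p₀ p₁ = y1 at h1 e11 hy1
  generalize dist p₀ p₂ = y2 at h2 e22 hy2
  generalize dist p₀ p₃ = y3 at h3 e33 hy3
  have hdet := gram_pos p₀ p₁ p₂ p₃ hindep _ _ _ _ _ _ (e11.trans h1) (e22.trans h2) (e33.trans h3)
    e12 e13 e23
  have hp0 : 0 ≤ (8 - a + b - f) / 2 := by linarith
  have hq0 : 0 ≤ (8 - a + c - e) / 2 := by linarith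
  have hr0 : 0 ≤ (4 + b + c - d) / 2 := by linarith
  have hA : 0 < y1 * y2 * y3 + y1 * ((4 + b + c - d) / 2) + y2 * ((8 - a + c - e) / 2)
        + y3 * ((8 - a + b - f) / 2) := by positivity
  have hU1 : 0 < (4 + b) * (4 + c) - ((4 + b + c - d) / 2) ^ 2 :=
    gram_two_pos _ _ _ (by linarith) (by linarith) (by linarith)
  have hU2 : 0 < (8 - a) * (4 + c) - ((8 - a + c - e) / 2) ^ 2 :=
    gram_two_pos _ _ _ (by linarith) (by linarith) (by linarith)
  have hU3 : 0 < (8 - a) * (4 + b) - ((8 - a + b - f) / 2) ^ 2 :=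
    gram_two_pos _ _ _ (by linarith) (by linarith) (by linarith)
  obtain ⟨D, hD, hDd⟩ : ∃ D : ℝ, 0 < D ∧ D ^ 2 = gramDet (8 - a) (4 + b) (4 + c)
      ((8 - a + b - f) / 2) ((8 - a + c - e) / 2) ((4 + b + c - d) / 2) :=
    ⟨√_, sqrt_pos.2 hdet, sq_sqrt hdet.le⟩
  obtain ⟨o, ho, o1, o2, o3⟩ := hcc
  obtain ⟨l1, l2, l3, hl1, hl2, hl3, hl, eo⟩ := hull_coords _ _ _ _ _ ho
  have eqd : ∀ v : E3, dist o p₀ = dist o v →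
      inner ℝ (o - p₀) (v - p₀) = inner ℝ (v - p₀) (v - p₀) / 2 := by
    intro v h
    have h' : dist o p₀ ^ 2 = dist o v ^ 2 := by rw [h]
    rw [dist_eq_norm, dist_eq_norm, show o - v = (o - p₀) - (v - p₀) by abel,
      norm_sub_sq_real (o - p₀) (v - p₀),
      ← real_inner_self_eq_norm_sq (v - p₀)] at h'
    linarith
  have e21 := (real_inner_comm (p₁ - p₀) (p₂ - p₀)).trans e12
  have e31 := (real_inner_comm (p₁ - p₀) (p₃ - p₀)).trans e13
  have e32 := (real_inner_comm (p₂ - p₀) (p₃ - p₀)).trans e23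
  have g1 := eqd _ o1
  have g2 := eqd _ o2
  have g3 := eqd _ o3
  rw [eo] at g1 g2 g3
  simp only [inner_add_left, real_inner_smul_left, e11, e22, e33, e12, e13, e23, e21, e31, e32,
    h1, h2, h3] at g1 g2 g3
  obtain ⟨k1, k2, k3⟩ := cramer_solve (8 - a) (4 + b) (4 + c)
      ((8 - a + b - f) / 2) ((8 - a + c - e) / 2) ((4 + b + c - d) / 2) l1 l2 l3
      (by linarith) (by linarith) (by linarith)
  have hN1 := mul_nonneg hdet.le hl1
  have hN2 := mul_nonneg hdet.le hl2
  have hN3 := mul_nonneg hdet.le hl3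
  rw [← k1] at hN1
  rw [← k2] at hN2
  rw [← k3] at hN3
  have main := final_real a b c d e f D y1 y2 y3 ha hb hc hd he hf ha' hb' hc' hd' he' hf' hcase
    hy1 hy2 hy3 h1 h2 h3 _ _ _ _ _ rfl rfl rfl rfl rfl hN1 hN2 hN3 hD hDd
  rw [k1, k2, k3, mul_div_cancel_left₀ _ hdet.ne', mul_div_cancel_left₀ _ hdet.ne',
    mul_div_cancel_left₀ _ hdet.ne'] at main
  have cell := volume_cell_E3 p₀ p₁ p₂ p₃ _ _ _ _ _ _ D _ (e11.trans h1) (e22.trans h2)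
    (e33.trans h3) e12 e13 e23 hD hDd
    (volume_cellK _ _ _ _ _ _ l1 l2 l3 (by linarith) (by linarith) (by linarith) hp0 hq0 hr0
      (by linarith) (by linarith) (by linarith) (by linarith) (by linarith) (by linarith)
      hU1 hU2 hU3 hN1 hN2 hN3 hl1 hl2 hl3 hl (by linarith) (by linarith) (by linarith))
  have cone := (cone_volume_le p₀ p₁ p₂ p₃).trans
    (solid_angle_bound _ _ _ y1 y2 y3 _ _ _ D hy1 hy2 hy3 e11 e22 e33 e12 e13 e23
      (lt_of_gram _ _ _ hy1 hy2 (by rw [h1, h2]; exact hU3))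
      (lt_of_gram _ _ _ hy1 hy3 (by rw [h1, h3]; exact hU2))
      (lt_of_gram _ _ _ hy2 hy3 (by rw [h2, h3]; exact hU1)) hD
      (by rw [h1, h2, h3]; exact hDd) hA)
  have hδ : 0 < δoct := by linarith [delta_bounds.1]
  have cell' := mul_le_mul_of_nonneg_left cell hδ.le
  unfold vor
  rw [measureReal_def] at cell' cone
  linarith

lemma sq_box (y lo hi : ℝ) (hlo : 0 ≤ lo) (h : y ∈ Set.Icc lo hi) :
    lo ^ 2 ≤ y ^ 2 ∧ y ^ 2 ≤ hi ^ 2 :=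
  ⟨pow_le_pow_left₀ hlo h.1 2, pow_le_pow_left₀ (hlo.trans h.1) h.2 2⟩

/-- Calculation 4.5.2, cells (1)–(3): Voronoi scoring of small simplices with a long
first edge is negative. -/
theorem vor_neg_long_first_edge (p₀ p₁ p₂ p₃ : E3)
    (hindep : AffineIndependent ℝ ![p₀, p₁, p₂, p₃])
    (hsmall : IsSmall p₀ p₁ p₂ p₃)
    (hcc : ContainsCircumcenter p₀ p₁ p₂ p₃)
    (h1 : dist p₀ p₁ ∈ Set.Icc (2.51 : ℝ) (2 * Real.sqrt 2))
    (hcase : (dist p₀ p₂ ∈ Set.Icc (2.06 : ℝ) (2.51) ∧ dist p₀ p₃ ∈ Set.Icc (2 : ℝ) (2.51) ∧ dist p₂ p₃ ∈ Set.Icc (2 : ℝ) (2.51) ∧ dist p₁ p₃ ∈ Set.Icc (2 : ℝ) (2.51) ∧ dist p₁ p₂ ∈ Set.Icc (2 : ℝ) (2.51)) ∨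
      (dist p₂ p₃ ∈ Set.Icc (2.06 : ℝ) (2.51) ∧ dist p₀ p₂ ∈ Set.Icc (2 : ℝ) (2.51) ∧ dist p₀ p₃ ∈ Set.Icc (2 : ℝ) (2.51) ∧ dist p₁ p₃ ∈ Set.Icc (2 : ℝ) (2.51) ∧ dist p₁ p₂ ∈ Set.Icc (2 : ℝ) (2.51)) ∨
      (dist p₁ p₃ ∈ Set.Icc (2.08 : ℝ) (2.51) ∧ dist p₀ p₂ ∈ Set.Icc (2 : ℝ) (2.51) ∧ dist p₀ p₃ ∈ Set.Icc (2 : ℝ) (2.51) ∧ dist p₂ p₃ ∈ Set.Icc (2 : ℝ) (2.51) ∧ dist p₁ p₂ ∈ Set.Icc (2 : ℝ) (2.51))) :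
    vor p₀ p₁ p₂ p₃ < 0 := by
  have b1 := sq_box _ _ _ (by norm_num) h1
  rw [mul_pow, sq_sqrt (by norm_num)] at b1
  rcases hcase with ⟨h2, h3, h4, h5, h6⟩ | ⟨h4, h2, h3, h5, h6⟩ | ⟨h5, h2, h3, h4, h6⟩
  all_goals
    have b2 := sq_box _ _ _ (by norm_num) h2
    have b3 := sq_box _ _ _ (by norm_num) h3
    have b4 := sq_box _ _ _ (by norm_num) h4
    have b5 := sq_box _ _ _ (by norm_num) h5
    have b6 := sq_box _ _ _ (by norm_num) h6
    norm_num at b1 b2 b3 b4 b5 b6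
    refine vor_neg_aux p₀ p₁ p₂ p₃ hindep hcc (8 - dist p₀ p₁ ^ 2) (dist p₀ p₂ ^ 2 - 4)
      (dist p₀ p₃ ^ 2 - 4) (dist p₂ p₃ ^ 2 - 4) (dist p₁ p₃ ^ 2 - 4) (dist p₁ p₂ ^ 2 - 4)
      (by ring) (by ring) (by ring) (by ring) (by ring) (by ring)
      (by linarith) (by linarith) (by linarith) (by linarith) (by linarith) (by linarith)
      (by linarith) (by linarith) (by linarith) (by linarith) (by linarith) (by linarith) ?_
  · left; linarith
  · right; left; linarith
  · right; right; linarith
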